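/- arXiv:2310.14742 — 3 statements merged into one kernel-verified Lean document; each statement's English description precedes it below -/
import Mathlib

section
/- Let d ≥ 3 and let D ⊂ ℝ^d be a bounded strongly minimally convex domain, with ε ∈ (0,1), N := closure(N_ε(∂D)) ∩ D, c > 0, F, and d_F as in the construction of the filling Finsler metric. Then the metric space (D, d_F) is Gromov hyperbolic: there exists δ ≥ 0 such that for all x₁, x₂, x₃, x₄ ∈ D, d_F(x₁,x₂) + d_F(x₃,x₄) ≤ max( d_F(x₁,x₃) + d_F(x₂,x₄), d_F(x₁,x₄) + d_F(x₂,x₃) ) + 2δ. -/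
/-!
The distance `d_F` is, up to a bounded additive error,
`2 log (q(x,y)) - log h(x) - log h(y)`, where `h` is the square root of the boundary distance
and `q(x,y) = ‖x - y‖ + max (h x) (h y)`. Since `q` satisfies the triangle inequality, the products
`q(x₁,x₂) q(x₃,x₄)` satisfy a four-point inequality with factor `4` (`mul_le_four_mul_max`), and the
terms `log h` cancel in the four-point condition. This gives Gromov hyperbolicity (`four_point`).

*Lower bound* (`exists_lower`). For fixed `x` consider the function
`z ↦ 2 log (‖x - z‖ / A + √e(x) + √e(z) - (2 / A) e(z)) - (log e(z)) / 2`,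
where `e` is the boundary distance truncated at `ε`. Along a curve the derivative of `e` is, up to
sign, the size of the normal velocity in the collar and zero outside it, and the derivative of
`‖x - z‖` is at most the speed. For large `A` the function therefore grows at most by the
`F`-length (`pot_sub_le`); the correction `-(2 / A) e(z)` absorbs the contribution of the normal
velocity to the derivative of `‖x - z‖`.

*Upper bound* (`exists_upper`). The only consequence of the defining function that is needed is
that a compact `C²` boundary has interior and exterior tangent balls of a uniform radius `r`
(`exists_twoBalls`). They describe the nearest-point projection explicitly, make the normal field
Lipschitz, and show that a segment of length `O(√t)` between two points at height `t` stays at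
height at least `t / 2` and is almost tangential. If `q(x,y)` is small, one climbs from `x` and `y`
along the normals to height `q(x,y)² / r` at cost given by logarithms (`exists_lift`), and the two
new points are joined by a segment of bounded `F`-length (`cross`). Otherwise one climbs to a fixed
height and uses that the remaining core of `D` is compact (`exists_core_bound`).
-/

open scoped RealInnerProductSpace ENNReal
open Metric Set Filter

noncomputable section

/-- Euclidean space `ℝ^d`. -/
abbrev Euc (d : ℕ) := EuclideanSpace ℝ (Fin d)

/-- The open unit disk in `ℝ²`. -/
def unitDisk : Set (Euc 2) := Metric.ball 0 1

/-- Partial derivative of `f` at `z` in the `i`-th coordinate direction. -/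
def pd {d : ℕ} (i : Fin 2) (f : Euc 2 → Euc d) (z : Euc 2) : Euc d :=
  fderiv ℝ f z (EuclideanSpace.single i 1)

/-- `f` is a conformal harmonic map on the unit disk: it is `C²`, its (vector)
Laplacian vanishes (equivalently, every component is harmonic), and at each point
its two partial derivatives are orthogonal and of equal norm. -/
def ConformalHarmonicOnDisk {d : ℕ} (f : Euc 2 → Euc d) : Prop :=
  ContDiffOn ℝ 2 f unitDisk ∧
  (∀ z ∈ unitDisk,
    fderiv ℝ (pd 0 f) z (EuclideanSpace.single 0 1)
      + fderiv ℝ (pd 1 f) z (EuclideanSpace.single 1 1) = 0) ∧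
  (∀ z ∈ unitDisk, ‖pd 0 f z‖ = ‖pd 1 f z‖ ∧ ⟪pd 0 f z, pd 1 f z⟫ = 0)

/-- The minimal (Forstnerič–Kalaj) metric of a domain `D ⊆ ℝ^d`:
`g_D(x,v) = inf {1/r : r > 0, f ∈ CH(𝔻, D), f 0 = x, f_x 0 = r • v}`. -/
def minMetric {d : ℕ} (D : Set (Euc d)) (x v : Euc d) : ℝ :=
  sInf {c : ℝ | ∃ r : ℝ, 0 < r ∧ c = 1 / r ∧
    ∃ f : Euc 2 → Euc d, ConformalHarmonicOnDisk f ∧ (∀ z ∈ unitDisk, f z ∈ D) ∧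
      f 0 = x ∧ pd 0 f 0 = r • v}

/-- `γ` is a piecewise `C¹` curve on `[a, b]`. -/
def PiecewiseC1On {d : ℕ} (γ : ℝ → Euc d) (a b : ℝ) : Prop :=
  ContinuousOn γ (Set.Icc a b) ∧
  ∃ (n : ℕ) (t : Fin (n + 2) → ℝ), Monotone t ∧ t 0 = a ∧ t (Fin.last (n + 1)) = b ∧
    ∀ i : Fin (n + 1), ContDiffOn ℝ 1 γ (Set.Icc (t i.castSucc) (t i.succ))

/-- The minimal pseudodistance `ρ_D`: infimum of minimal lengths of piecewise `C¹`
curves in `D` joining `x` to `y`. -/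
def minDist {d : ℕ} (D : Set (Euc d)) (x y : Euc d) : ℝ :=
  sInf {L : ℝ | ∃ γ : ℝ → Euc d, PiecewiseC1On γ 0 1 ∧
    (∀ t ∈ Set.Icc (0:ℝ) 1, γ t ∈ D) ∧ γ 0 = x ∧ γ 1 = y ∧
    L = ∫ t in (0:ℝ)..(1:ℝ), minMetric D (γ t) (deriv γ t)}

/-- The Gromov product `(x|y)_o` with respect to the minimal pseudodistance of `D`. -/
def gromovProd {d : ℕ} (D : Set (Euc d)) (o x y : Euc d) : ℝ :=
  (minDist D x o + minDist D y o - minDist D x y) / 2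

/-- `D` is hyperbolic: the minimal pseudodistance is a genuine distance. -/
def MinHyperbolic {d : ℕ} (D : Set (Euc d)) : Prop :=
  ∀ x ∈ D, ∀ y ∈ D, x ≠ y → 0 < minDist D x y

/-- The Hessian quadratic form of `u` at `x` in direction `v`. -/
def hessQ {d : ℕ} (u : Euc d → ℝ) (x v : Euc d) : ℝ :=
  fderiv ℝ (fun y => fderiv ℝ u y v) x v

/-- `D` is a bounded domain with `C²` boundary, described by a `C²` defining
function `u` on a neighborhood `U` of `∂D` with nonvanishing differential. -/
def IsC2BoundedDomain {d : ℕ} (D : Set (Euc d)) : Prop :=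
  IsOpen D ∧ IsConnected D ∧ Bornology.IsBounded D ∧
  ∃ (U : Set (Euc d)) (u : Euc d → ℝ), IsOpen U ∧ frontier D ⊆ U ∧ ContDiffOn ℝ 2 u U ∧
    D ∩ U = {x | x ∈ U ∧ u x < 0} ∧ frontier D = {x | x ∈ U ∧ u x = 0} ∧
    ∀ x ∈ frontier D, fderiv ℝ u x ≠ 0

/-- `D` is a bounded strongly minimally convex domain: it has a `C²` defining function
which is strongly minimally plurisubharmonic near `∂D`, i.e. the trace of its Hessian
on every 2-plane (spanned by an orthonormal pair `v, w`) is strictly positive. -/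
def IsStronglyMinimallyConvex {d : ℕ} (D : Set (Euc d)) : Prop :=
  IsOpen D ∧ IsConnected D ∧ Bornology.IsBounded D ∧
  ∃ (U : Set (Euc d)) (u : Euc d → ℝ), IsOpen U ∧ frontier D ⊆ U ∧ ContDiffOn ℝ 2 u U ∧
    D ∩ U = {x | x ∈ U ∧ u x < 0} ∧ frontier D = {x | x ∈ U ∧ u x = 0} ∧
    (∀ x ∈ frontier D, fderiv ℝ u x ≠ 0) ∧
    (∀ x ∈ U, ∀ v w : Euc d, ‖v‖ = 1 → ‖w‖ = 1 → ⟪v, w⟫ = 0 →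
      0 < hessQ u x v + hessQ u x w)

/-- `D` is a bounded strongly convex domain: convex, with a `C²` defining function whose
Hessian is positive definite on the tangent space at every boundary point
(equivalently, all principal curvatures of `∂D` w.r.t. the inner normal are positive). -/
def IsStronglyConvexDomain {d : ℕ} (D : Set (Euc d)) : Prop :=
  IsOpen D ∧ IsConnected D ∧ Bornology.IsBounded D ∧ Convex ℝ D ∧
  ∃ (U : Set (Euc d)) (u : Euc d → ℝ), IsOpen U ∧ frontier D ⊆ U ∧ ContDiffOn ℝ 2 u U ∧
    D ∩ U = {x | x ∈ U ∧ u x < 0} ∧ frontier D = {x | x ∈ U ∧ u x = 0} ∧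
    (∀ x ∈ frontier D, fderiv ℝ u x ≠ 0) ∧
    (∀ ξ ∈ frontier D, ∀ w : Euc d, w ≠ 0 → fderiv ℝ u ξ w = 0 → 0 < hessQ u ξ w)

/-- For `x ∈ D` with nearest boundary point `p`, the outer unit normal direction
`n_{π(x)} = (p - x)/‖p - x‖`. -/
def nvec {d : ℕ} (x p : Euc d) : Euc d := ‖p - x‖⁻¹ • (p - x)

/-- Normal component of `v` at `x` with nearest boundary point `p`. -/
def vN {d : ℕ} (x p v : Euc d) : Euc d := ⟪v, nvec x p⟫ • nvec x p

/-- Tangential component of `v` at `x` with nearest boundary point `p`. -/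
def vT {d : ℕ} (x p v : Euc d) : Euc d := v - vN x p v

/-- The intrinsic distance `H` on the boundary `∂D`: infimum of Euclidean lengths of
piecewise `C¹` curves in `∂D` joining two boundary points. -/
def bdist {d : ℕ} (D : Set (Euc d)) (ξ η : Euc d) : ℝ :=
  sInf {L : ℝ | ∃ α : ℝ → Euc d, PiecewiseC1On α 0 1 ∧
    (∀ t ∈ Set.Icc (0:ℝ) 1, α t ∈ frontier D) ∧ α 0 = ξ ∧ α 1 = η ∧
    L = ∫ t in (0:ℝ)..(1:ℝ), ‖deriv α t‖}

/-- `h(x) = δ_D(x)^{1/2}`. -/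
def hfun {d : ℕ} (D : Set (Euc d)) (x : Euc d) : ℝ :=
  Real.sqrt (Metric.infDist x (frontier D))

/-- The length of a curve with respect to the boundary Finsler metric
`F(x,v) = ‖v_N‖/(2 δ_D(x)) + ‖v_T‖/δ_D(x)^{1/2}`. -/
def Flen {d : ℕ} (D : Set (Euc d)) (π : Euc d → Euc d) (γ : ℝ → Euc d) : ℝ :=
  ∫ t in (0:ℝ)..(1:ℝ),
    (‖vN (γ t) (π (γ t)) (deriv γ t)‖ / (2 * Metric.infDist (γ t) (frontier D))
      + ‖vT (γ t) (π (γ t)) (deriv γ t)‖ / Real.sqrt (Metric.infDist (γ t) (frontier D)))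

/-- The filling Finsler metric `F`: the boundary Finsler metric on
`N = {δ_D ≤ ε}` and `c‖v‖` elsewhere. -/
def Fmet {d : ℕ} (D : Set (Euc d)) (π : Euc d → Euc d) (ε c : ℝ) (x v : Euc d) : ℝ :=
  if Metric.infDist x (frontier D) ≤ ε then
    ‖vN x (π x) v‖ / (2 * Metric.infDist x (frontier D))
      + ‖vT x (π x) v‖ / Real.sqrt (Metric.infDist x (frontier D))
  else c * ‖v‖

/-- The intrinsic distance `d_F` associated to the filling Finsler metric `F`. -/
def dF {d : ℕ} (D : Set (Euc d)) (π : Euc d → Euc d) (ε c : ℝ) (x y : Euc d) : ℝ :=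
  sInf {L : ℝ | ∃ γ : ℝ → Euc d, PiecewiseC1On γ 0 1 ∧
    (∀ t ∈ Set.Icc (0:ℝ) 1, γ t ∈ D) ∧ γ 0 = x ∧ γ 1 = y ∧
    L = ∫ t in (0:ℝ)..(1:ℝ), Fmet D π ε c (γ t) (deriv γ t)}

/-- The hyperbolic filling distance
`d_H(x,y) = 2 log((H(π x, π y) + h(x) ∨ h(y)) / √(h(x) h(y)))`. -/
def dH {d : ℕ} (D : Set (Euc d)) (π : Euc d → Euc d) (x y : Euc d) : ℝ :=
  2 * Real.log ((bdist D (π x) (π y) + max (hfun D x) (hfun D y)) /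
    Real.sqrt (hfun D x * hfun D y))

/-- `δ̂_D(x,v)`: the supremum over 2-dimensional linear subspaces `Λ ∋ v` of the
distance (in `ℝ≥0∞`, so `∞` if `x + Λ ⊆ D`) from `x` to `(x + Λ) \ D`. -/
def deltaHat {d : ℕ} (D : Set (Euc d)) (x v : Euc d) : ℝ≥0∞ :=
  ⨆ (Λ : Submodule ℝ (Euc d)) (_ : Module.finrank ℝ Λ = 2) (_ : v ∈ Λ),
    ⨅ (y : Euc d) (_ : y - x ∈ Λ ∧ y ∉ D), edist x y

/-- The positive parameter at which the ray `t ↦ x + t • v` exits the convex domain `D`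
(equal to `0`, by the `sInf ∅ = 0` convention, when the ray stays in `D`,
i.e. when the corresponding chord endpoint is the point at infinity). -/
def chordParam {d : ℕ} (D : Set (Euc d)) (x v : Euc d) : ℝ :=
  sInf {s : ℝ | 0 < s ∧ x + s • v ∉ D}

/-- The Hilbert Finsler metric `h_D(x,v) = (‖v‖/2)(1/‖x-a‖ + 1/‖x-b‖)` of a convex
domain, with the convention `1/‖x-∞‖ = 0` (here `‖x-b‖ = chordParam D x v • ‖v‖` and
`‖x-a‖ = chordParam D x (-v) • ‖v‖`, and division by zero is zero). -/
def hilbertFinsler {d : ℕ} (D : Set (Euc d)) (x v : Euc d) : ℝ :=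
  (1/2) * (1 / chordParam D x v + 1 / chordParam D x (-v))

/- The Hilbert distance of a convex domain: for `x ≠ y`,
`H_D(x,y) = ½ log((‖x-b‖ ‖y-a‖)/(‖x-a‖ ‖y-b‖))` where `a, x, y, b` are aligned on the
chord through `x, y`, with the convention that ratios involving the point at infinity
(detected by `chordParam = 0`) are equal to `1`. -/
open Classical in
def hilbertDist {d : ℕ} (D : Set (Euc d)) (x y : Euc d) : ℝ :=
  if x = y then 0 else
    (1/2) * Real.log
      ((if chordParam D x (y - x) = 0 then 1
        else chordParam D x (y - x) / (chordParam D x (y - x) - 1)) *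
       (if chordParam D x (x - y) = 0 then 1
        else (1 + chordParam D x (x - y)) / chordParam D x (x - y)))

/-! ### Piecewise `C¹` curves -/

section Curves

variable {d : ℕ} {γ γ' : ℝ → Euc d} {a b e : ℝ}

lemma PiecewiseC1On.congr (h : PiecewiseC1On γ a b) (he : EqOn γ' γ (Icc a b)) :
    PiecewiseC1On γ' a b := by
  obtain ⟨hc, n, t, hm, h0, h1, ht⟩ := h
  refine ⟨hc.congr he, n, t, hm, h0, h1, fun i => (ht i).congr fun s hs => he ?_⟩
  refine ⟨?_, ?_⟩
  · rw [← h0]; exact (hm (Fin.zero_le _)).trans hs.1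
  · rw [← h1]; exact hs.2.trans (hm (Fin.le_last _))

lemma PiecewiseC1On.comp_affine {k p : ℝ} (hk : 0 < k)
    (h : PiecewiseC1On γ (k * a + p) (k * b + p)) :
    PiecewiseC1On (fun s => γ (k * s + p)) a b := by
  obtain ⟨hc, n, t, hm, h0, h1, ht⟩ := h
  refine ⟨?_, n, fun i => (t i - p) / k, ?_, ?_, ?_, fun i => ?_⟩
  · refine hc.comp (by fun_prop) fun s hs => ⟨?_, ?_⟩
    · have := mul_le_mul_of_nonneg_left hs.1 hk.le; linarith
    · have := mul_le_mul_of_nonneg_left hs.2 hk.le; linarith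
  · intro i j hij
    have := hm hij
    simp only
    gcongr
  · simp only [h0]; field_simp; ring
  · simp only [h1]; field_simp; ring
  · refine (ht i).comp (by fun_prop) fun s hs => ?_
    have h2 := hs.1
    have h3 := hs.2
    rw [div_le_iff₀ hk] at h2
    rw [le_div_iff₀ hk] at h3
    constructor <;> linarith

lemma PiecewiseC1On.append (hab : a ≤ b) (hbe : b ≤ e)
    (h : PiecewiseC1On γ a b) (h' : PiecewiseC1On γ b e) : PiecewiseC1On γ a e := by
  obtain ⟨hc, n, t, hm, h0, h1, ht⟩ := h
  obtain ⟨hc', m, s, hm', h0', h1', ht'⟩ := h'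
  refine ⟨?_, n + m + 1, fun i => if h : (i : ℕ) ≤ n + 1 then t ⟨i, by omega⟩
    else s ⟨i - (n + 1), by omega⟩, ?_, ?_, ?_, ?_⟩
  · rw [← Icc_union_Icc_eq_Icc hab hbe]
    exact hc.union_of_isClosed hc' isClosed_Icc isClosed_Icc
  · intro i j hij
    have hij' : (i : ℕ) ≤ j := hij
    have hb1 : ∀ k, t k ≤ b := fun k => h1 ▸ hm (Fin.le_last _)
    have hb2 : ∀ k, b ≤ s k := fun k => h0' ▸ hm' (Fin.zero_le _)
    simp only
    split_ifs with hi hj hj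
    · exact hm hij'
    · exact (hb1 _).trans (hb2 _)
    · omega
    · exact hm' (by simp only [Fin.mk_le_mk]; omega)
  · simp only [Fin.val_zero, Nat.zero_le]
    exact h0
  · have : ¬ ((Fin.last (n + m + 1 + 1) : Fin _) : ℕ) ≤ n + 1 := by
      simp only [Fin.val_last]; omega
    simp only [this, dite_false]
    rw [← h1']
    congr 1
    ext
    simp only [Fin.val_last]
    omega
  · intro i
    by_cases hi : (i : ℕ) + 1 ≤ n + 1
    · have e1 : (i : ℕ) ≤ n + 1 := by omega
      simp only [Fin.val_castSucc, Fin.val_succ, hi, e1, dite_true]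
      exact ht ⟨i, by omega⟩
    · by_cases hi' : (i : ℕ) = n + 1
      · have e1 : (i : ℕ) ≤ n + 1 := by omega
        simp only [Fin.val_castSucc, Fin.val_succ, hi, e1, dite_true, dite_false]
        have := ht' ⟨0, by omega⟩
        convert this using 2
        · have e2 : (Fin.castSucc ⟨0, by omega⟩ : Fin (m + 2)) = 0 := rfl
          rw [e2, h0', ← h1]
          congr 1
          ext; simp [hi']
        · congr 1
          ext; simp [hi']
      · have e1 : ¬ (i : ℕ) ≤ n + 1 := by omega
        simp only [Fin.val_castSucc, Fin.val_succ, hi, e1, dite_false]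
        have := ht' ⟨i - (n + 1), by omega⟩
        convert this using 3
        all_goals
          refine Fin.ext ?_
          simp only [Fin.val_succ, Fin.val_castSucc]
          try omega

/-- A piecewise `C¹` curve is Lipschitz; this is all that the length estimates use. -/
lemma PiecewiseC1On.exists_lipschitz (h : PiecewiseC1On γ a b) :
    ∃ K, LipschitzOnWith K γ (Icc a b) := by
  obtain ⟨hc, n, t, hm, h0, h1, ht⟩ := h
  suffices H : ∀ k : ℕ, ∀ hk : k < n + 2, ∃ K, LipschitzOnWith K γ (Icc a (t ⟨k, hk⟩)) by
    obtain ⟨K, hK⟩ := H (n + 1) (by omega)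
    exact ⟨K, h1 ▸ hK⟩
  intro k
  induction k with
  | zero =>
    intro hk
    refine ⟨0, ?_⟩
    have : t ⟨0, hk⟩ = a := h0
    rw [this, Icc_self]
    intro x hx y hy
    rw [mem_singleton_iff] at hx hy
    simp [hx, hy]
  | succ k ih =>
    intro hk
    obtain ⟨K, hK⟩ := ih (by omega)
    obtain ⟨K', hK'⟩ := (ht ⟨k, by omega⟩).exists_lipschitzOnWith (by decide) (convex_Icc _ _)
      isCompact_Icc
    have hK'' : LipschitzOnWith K' γ (Icc (t ⟨k, by omega⟩) (t ⟨k + 1, hk⟩)) := hK'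
    refine ⟨max K K', ?_⟩
    set m := t ⟨k, by omega⟩ with hmdef
    set M := t ⟨k + 1, hk⟩
    have ham : a ≤ m := h0 ▸ hm (Fin.zero_le _)
    have hmM : m ≤ M := hm (by simp)
    -- it suffices to treat ordered pairs, and only those separated by `m` need both pieces
    have key : ∀ x ∈ Icc a M, ∀ y ∈ Icc a M, x ≤ y → dist (γ x) (γ y) ≤ max K K' * dist x y := by
      intro x hx y hy hxy
      have l1 : (K : ℝ) ≤ max K K' := by exact_mod_cast le_max_left _ _
      have l2 : (K' : ℝ) ≤ max K K' := by exact_mod_cast le_max_right _ _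
      have dn : ∀ p q : ℝ, 0 ≤ dist p q := fun _ _ => dist_nonneg
      rcases le_total y m with hym | hym
      · exact (hK.dist_le_mul x ⟨hx.1, hxy.trans hym⟩ y ⟨hy.1, hym⟩).trans
          (mul_le_mul_of_nonneg_right l1 (dn _ _))
      · rcases le_total m x with hmx | hmx
        · exact (hK''.dist_le_mul x ⟨hmx, hx.2⟩ y ⟨hym, hy.2⟩).trans
            (mul_le_mul_of_nonneg_right l2 (dn _ _))
        · have e1 := hK.dist_le_mul x ⟨hx.1, hmx⟩ m ⟨ham, le_rfl⟩
          have e2 := hK''.dist_le_mul m ⟨le_rfl, hmM⟩ y ⟨hym, hy.2⟩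
          have e3 : dist x y = dist x m + dist m y := by
            rw [Real.dist_eq, Real.dist_eq, Real.dist_eq, abs_of_nonpos (by linarith),
              abs_of_nonpos (by linarith), abs_of_nonpos (by linarith)]
            ring
          rw [e3, mul_add]
          have e4 := mul_le_mul_of_nonneg_right l1 (dn x m)
          have e5 := mul_le_mul_of_nonneg_right l2 (dn m y)
          linarith [dist_triangle (γ x) (γ m) (γ y)]
    refine LipschitzOnWith.of_dist_le_mul fun x hx y hy => ?_
    rcases le_total x y with hxy | hxy
    · exact_mod_cast key x hx y hy hxy
    · rw [dist_comm (γ x), dist_comm x]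
      exact_mod_cast key y hy x hx hxy

end Curves

/-! ### The metric `F` and lengths of curves -/

/-- The standing assumptions on the domain `D`, the projection `π` and the parameters `ε`, `c`
that do not involve the regularity of the boundary. -/
structure FillingData {d : ℕ} (D : Set (Euc d)) (π : Euc d → Euc d) (ε c : ℝ) : Prop where
  isOpen : IsOpen D
  conn : IsConnected D
  bdd : Bornology.IsBounded D
  front : (frontier D).Nonempty
  ε0 : 0 < ε
  ε1 : ε < 1
  c0 : 0 < c
  proj : ∀ x : Euc d, Metric.infDist x (frontier D) ≤ ε →
      π x ∈ frontier D ∧ dist x (π x) = Metric.infDist x (frontier D) ∧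
      ∀ q ∈ frontier D, dist x q = Metric.infDist x (frontier D) → q = π x

section Basic

variable {d : ℕ} {D : Set (Euc d)} {π : Euc d → Euc d} {ε c : ℝ}

lemma norm_nvec_le (x p : Euc d) : ‖nvec x p‖ ≤ 1 := by
  unfold nvec
  rw [norm_smul, norm_inv, norm_norm]
  exact inv_mul_le_one

lemma norm_vN_le (x p v : Euc d) : ‖vN x p v‖ ≤ ‖v‖ := by
  unfold vN
  rw [norm_smul]
  have h1 := norm_nvec_le x p
  have h2 : ‖⟪v, nvec x p⟫‖ ≤ ‖v‖ * ‖nvec x p‖ := norm_inner_le_norm _ _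
  nlinarith [norm_nonneg v, norm_nonneg (nvec x p), norm_nonneg ⟪v, nvec x p⟫,
    mul_le_mul_of_nonneg_left h1 (norm_nonneg v)]

lemma norm_vT_le (x p v : Euc d) : ‖vT x p v‖ ≤ 2 * ‖v‖ := by
  unfold vT
  linarith [norm_sub_le v (vN x p v), norm_vN_le x p v]

lemma norm_le_vN_add_vT (x p v : Euc d) : ‖v‖ ≤ ‖vN x p v‖ + ‖vT x p v‖ := by
  have : v = vN x p v + vT x p v := by unfold vT; abel
  calc ‖v‖ = ‖vN x p v + vT x p v‖ := by rw [← this]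
    _ ≤ _ := norm_add_le _ _

lemma Fmet_nonneg (hc : 0 ≤ c) (x v : Euc d) : 0 ≤ Fmet D π ε c x v := by
  unfold Fmet
  have := infDist_nonneg (x := x) (s := frontier D)
  split_ifs <;> positivity

lemma vN_smul (x p v : Euc d) (k : ℝ) : vN x p (k • v) = k • vN x p v := by
  unfold vN
  rw [real_inner_smul_left, mul_smul]

lemma vT_smul (x p v : Euc d) (k : ℝ) : vT x p (k • v) = k • vT x p v := by
  unfold vT
  rw [vN_smul, smul_sub]

lemma Fmet_smul (x v : Euc d) (k : ℝ) :
    Fmet D π ε c x (k • v) = |k| * Fmet D π ε c x v := by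
  unfold Fmet
  rw [vN_smul, vT_smul, norm_smul, norm_smul, norm_smul, Real.norm_eq_abs]
  split_ifs <;> ring

lemma Fmet_le {m : ℝ} (hm : 0 < m) (hc : 0 ≤ c) (x v : Euc d)
    (hx : m ≤ infDist x (frontier D)) :
    Fmet D π ε c x v ≤ (1 / (2 * m) + 2 / √m + c) * ‖v‖ := by
  unfold Fmet
  have h1 := norm_vN_le x (π x) v
  have h2 := norm_vT_le x (π x) v
  have hs : 0 < √m := Real.sqrt_pos.2 hm
  have hs' : √m ≤ √(infDist x (frontier D)) := Real.sqrt_le_sqrt hx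
  have hv := norm_nonneg v
  split_ifs
  · have e1 : ‖vN x (π x) v‖ / (2 * infDist x (frontier D)) ≤ ‖v‖ / (2 * m) := by gcongr
    have e2 : ‖vT x (π x) v‖ / √(infDist x (frontier D)) ≤ 2 * ‖v‖ / √m := by gcongr
    have e3 : (1 / (2 * m) + 2 / √m + c) * ‖v‖ = ‖v‖ / (2 * m) + 2 * ‖v‖ / √m + c * ‖v‖ := by
      ring
    rw [e3]
    have := mul_nonneg hc hv
    linarith
  · have : 0 ≤ (1 / (2 * m) + 2 / √m) * ‖v‖ := by positivity
    linarith

namespace FillingData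

lemma isCompact_frontier (hF : FillingData D π ε c) : IsCompact (frontier D) :=
  hF.bdd.isCompact_closure.of_isClosed_subset isClosed_frontier frontier_subset_closure

lemma notMem_frontier (hF : FillingData D π ε c) {x : Euc d} (hx : x ∈ D) : x ∉ frontier D := by
  rw [hF.isOpen.frontier_eq]
  exact fun h => h.2 hx

lemma infDist_pos (hF : FillingData D π ε c) {x : Euc d} (hx : x ∈ D) :
    0 < infDist x (frontier D) :=
  (isClosed_frontier.notMem_iff_infDist_pos hF.front).1 (hF.notMem_frontier hx)

/-- A connected set meeting `D` but not `∂D` lies in `D`. -/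
lemma subset_of_connected (hF : FillingData D π ε c)
    {S : Set (Euc d)} (hS : IsPreconnected S) {x : Euc d} (hx : x ∈ S)
    (hxD : x ∈ D) (hd : ∀ y ∈ S, y ∉ frontier D) : S ⊆ D := by
  refine hS.subset_left_of_subset_union hF.isOpen (isOpen_compl_iff.2 (isClosed_closure (s := D)))
    ?_ ?_ ⟨x, hx, hxD⟩
  · exact disjoint_compl_right.mono_left subset_closure |>.mono_right le_rfl
  · intro y hy
    by_cases h : y ∈ D
    · exact Or.inl h
    · refine Or.inr fun hcl => hd y hy ?_
      rw [hF.isOpen.frontier_eq]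
      exact ⟨hcl, h⟩

lemma ball_subset (hF : FillingData D π ε c) {x : Euc d} (hx : x ∈ D) :
    ball x (infDist x (frontier D)) ⊆ D := by
  refine hF.subset_of_connected (convex_ball _ _).isPreconnected
    (mem_ball_self (hF.infDist_pos hx)) hx fun y hy hyf => ?_
  have := infDist_le_dist_of_mem (x := x) hyf
  rw [mem_ball, dist_comm] at hy
  linarith

/-- Uniqueness of nearest points and compactness of `∂D` make `π` continuous. -/
lemma continuousOn_proj (hF : FillingData D π ε c) :
    ContinuousOn π {x | infDist x (frontier D) ≤ ε} := by
  intro x hx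
  refine hF.isCompact_frontier.tendsto_nhds_of_unique_mapClusterPt ?_ ?_
  · filter_upwards [self_mem_nhdsWithin] with y hy using (hF.proj y hy).1
  · intro q hq hcl
    refine (hF.proj x hx).2.2 q hq (le_antisymm ?_ (infDist_le_dist_of_mem hq))
    refine le_of_forall_pos_le_add fun η hη => ?_
    have h1 : ∃ᶠ y in nhdsWithin x {x | infDist x (frontier D) ≤ ε}, π y ∈ ball q (η / 3) :=
      hcl.frequently (ball_mem_nhds q (by positivity))
    have h2 : ∀ᶠ y in nhdsWithin x {x | infDist x (frontier D) ≤ ε},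
        y ∈ {x | infDist x (frontier D) ≤ ε} ∩ ball x (η / 3) :=
      inter_mem self_mem_nhdsWithin (mem_nhdsWithin_of_mem_nhds (ball_mem_nhds x (by positivity)))
    obtain ⟨y, hy1, hy2, hy3⟩ := (h1.and_eventually h2).exists
    have e1 := (hF.proj y hy2).2.1
    have e2 := infDist_le_infDist_add_dist (s := frontier D) (x := y) (y := x)
    rw [mem_ball] at hy1 hy3
    have e3 := dist_triangle4 x y (π y) q
    rw [dist_comm x y] at e3
    linarith

lemma exists_infDist_lower (hF : FillingData D π ε c) {γ : ℝ → Euc d} (hγ : ContinuousOn γ (Icc 0 1))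
    (hγD : ∀ t ∈ Icc (0 : ℝ) 1, γ t ∈ D) :
    ∃ m > 0, ∀ t ∈ Icc (0 : ℝ) 1, m ≤ infDist (γ t) (frontier D) := by
  obtain ⟨t, ht, hmin⟩ := isCompact_Icc.exists_isMinOn (nonempty_Icc.2 zero_le_one)
    ((continuous_infDist_pt (frontier D)).comp_continuousOn hγ)
  exact ⟨_, hF.infDist_pos (hγD t ht), fun s hs => hmin hs⟩

/-- The integrand defining the `F`-length of an admissible curve is integrable, so that the
integral in `dF` is never a junk value. -/
lemma integrable (hF : FillingData D π ε c) {γ : ℝ → Euc d} (hγ : PiecewiseC1On γ 0 1)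
    (hγD : ∀ t ∈ Icc (0 : ℝ) 1, γ t ∈ D) :
    IntervalIntegrable (fun t => Fmet D π ε c (γ t) (deriv γ t)) MeasureTheory.volume 0 1 := by
  classical
  obtain ⟨m, hm, hmb⟩ := hF.exists_infDist_lower hγ.1 hγD
  obtain ⟨K, hK⟩ := hγ.exists_lipschitz
  -- a globally continuous extension of `γ`, and a globally measurable version of `π ∘ γ`
  set g : ℝ → Euc d := fun t => γ (projIcc 0 1 zero_le_one t) with hg
  have hgc : Continuous g := hγ.1.domRestrict.comp continuous_projIcc
  have hge : ∀ t ∈ Icc (0 : ℝ) 1, g t = γ t := fun t ht => by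
    simp only [hg, projIcc_of_mem zero_le_one ht]
  set S : Set ℝ := {t | infDist (g t) (frontier D) ≤ ε} with hS
  have hSc : IsClosed S := isClosed_le ((continuous_infDist_pt _).comp hgc) continuous_const
  set p : ℝ → Euc d := S.piecewise (fun t => π (g t)) (fun _ => 0) with hp
  have hpm : Measurable p := by
    refine ContinuousOn.measurable_piecewise ?_ continuousOn_const hSc.measurableSet
    exact hF.continuousOn_proj.comp hgc.continuousOn fun t ht => ht
  have hgm : Measurable g := hgc.measurable
  have hdm : Measurable (deriv γ) := measurable_deriv γ
  have hδm : Measurable fun t => infDist (g t) (frontier D) :=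
    ((continuous_infDist_pt _).comp hgc).measurable
  have hnm : Measurable fun t => nvec (g t) (p t) := by unfold nvec; fun_prop
  have hvN : Measurable fun t => vN (g t) (p t) (deriv γ t) := by
    unfold vN
    exact (Measurable.inner (𝕜 := ℝ) hdm hnm).smul hnm
  have hvT : Measurable fun t => vT (g t) (p t) (deriv γ t) := by
    unfold vT
    exact hdm.sub hvN
  set G : ℝ → ℝ := S.piecewise (fun t => ‖vN (g t) (p t) (deriv γ t)‖ /
      (2 * infDist (g t) (frontier D)) + ‖vT (g t) (p t) (deriv γ t)‖ /
        √(infDist (g t) (frontier D))) (fun t => c * ‖deriv γ t‖) with hG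
  have hGm : Measurable G := by
    refine Measurable.piecewise hSc.measurableSet ?_ ?_
    · exact (hvN.norm.div (hδm.const_mul 2)).add (hvT.norm.div hδm.sqrt)
    · exact hdm.norm.const_mul c
  have hGe : ∀ t ∈ Icc (0 : ℝ) 1, G t = Fmet D π ε c (γ t) (deriv γ t) := by
    intro t ht
    unfold Fmet
    by_cases h : t ∈ S
    · have h' : infDist (γ t) (frontier D) ≤ ε := by rw [← hge t ht]; exact h
      rw [hG, piecewise_eq_of_mem _ _ _ h, if_pos h']
      simp only [hp, piecewise_eq_of_mem _ _ _ h, hge t ht]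
    · have h' : ¬ infDist (γ t) (frontier D) ≤ ε := by rw [← hge t ht]; exact h
      rw [hG, piecewise_eq_of_notMem _ _ _ h, if_neg h']
  rw [intervalIntegrable_iff_integrableOn_Ioo_of_le zero_le_one]
  refine MeasureTheory.IntegrableOn.congr_fun (f := G) ?_
    (fun t ht => hGe t (Ioo_subset_Icc_self ht)) measurableSet_Ioo
  refine MeasureTheory.Measure.integrableOn_of_bounded
    (M := (1 / (2 * m) + 2 / √m + c) * K) (by simp) hGm.aestronglyMeasurable ?_
  refine (MeasureTheory.ae_restrict_mem measurableSet_Ioo).mono fun t ht => ?_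
  have ht' := Ioo_subset_Icc_self ht
  rw [hGe t ht', Real.norm_of_nonneg (Fmet_nonneg hF.c0.le _ _)]
  refine (Fmet_le hm hF.c0.le _ _ (hmb t ht')).trans ?_
  have h1 : ‖deriv γ t‖ ≤ K := norm_deriv_le_of_lipschitzOn (Icc_mem_nhds ht.1 ht.2) hK
  have := hF.c0
  gcongr

end FillingData

/-- There is an admissible curve from `x` to `y` of `F`-length at most `L`. -/
def Joins (D : Set (Euc d)) (π : Euc d → Euc d) (ε c : ℝ) (x y : Euc d) (L : ℝ) : Prop :=
  ∃ γ : ℝ → Euc d, PiecewiseC1On γ 0 1 ∧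
    (∀ t ∈ Set.Icc (0:ℝ) 1, γ t ∈ D) ∧ γ 0 = x ∧ γ 1 = y ∧
    ∫ t in (0:ℝ)..(1:ℝ), Fmet D π ε c (γ t) (deriv γ t) ≤ L

lemma Joins.dF_le {x y : Euc d} {L : ℝ} (hc : 0 ≤ c) (h : Joins D π ε c x y L) :
    dF D π ε c x y ≤ L := by
  obtain ⟨γ, h1, h2, h3, h4, h5⟩ := h
  unfold dF
  refine (csInf_le ⟨0, ?_⟩ (Set.mem_ofPred_eq ▸ ⟨γ, h1, h2, h3, h4, rfl⟩)).trans h5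
  rintro L ⟨γ, -, -, -, -, rfl⟩
  exact intervalIntegral.integral_nonneg zero_le_one fun t _ => Fmet_nonneg hc _ _

lemma Joins.mono {x y : Euc d} {L L' : ℝ} (h : Joins D π ε c x y L) (hL : L ≤ L') :
    Joins D π ε c x y L' := by
  obtain ⟨γ, h1, h2, h3, h4, h5⟩ := h
  exact ⟨γ, h1, h2, h3, h4, h5.trans hL⟩

lemma Joins.trans {x y z : Euc d} {L L' : ℝ} (hF : FillingData D π ε c)
    (h : Joins D π ε c x y L) (h' : Joins D π ε c y z L') : Joins D π ε c x z (L + L') := by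
  obtain ⟨γ, h1, h2, h3, h4, h5⟩ := h
  obtain ⟨γ', h1', h2', h3', h4', h5'⟩ := h'
  set g : ℝ → Euc d := fun t => if t ≤ 1 / 2 then γ (2 * t + 0) else γ' (2 * t + -1) with hg
  have e1 : EqOn g (fun t => γ (2 * t + 0)) (Icc 0 (1 / 2)) := fun t ht => if_pos ht.2
  have e2 : EqOn g (fun t => γ' (2 * t + -1)) (Icc (1 / 2) 1) := by
    intro t ht
    rcases eq_or_lt_of_le ht.1 with h | h
    · subst h
      simp only [hg]
      norm_num
      rw [h4, h3']
    · exact if_neg (not_le.2 h)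
  have p1 : PiecewiseC1On g 0 (1 / 2) :=
    (PiecewiseC1On.comp_affine (k := 2) (p := 0) (by norm_num) (by norm_num; exact h1)).congr e1
  have p2 : PiecewiseC1On g (1 / 2) 1 :=
    (PiecewiseC1On.comp_affine (k := 2) (p := -1) (by norm_num) (by norm_num; exact h1')).congr e2
  have p : PiecewiseC1On g 0 1 := p1.append (by norm_num) (by norm_num) p2
  have gD : ∀ t ∈ Icc (0 : ℝ) 1, g t ∈ D := by
    intro t ht
    rcases le_total t (1 / 2) with h | h
    · rw [e1 ⟨ht.1, h⟩]
      exact h2 _ ⟨by linarith [ht.1], by linarith⟩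
    · rw [e2 ⟨h, ht.2⟩]
      exact h2' _ ⟨by linarith, by linarith [ht.2]⟩
  -- the chain rule together with homogeneity of `F` in the vector variable
  have dcomp : ∀ (f : ℝ → Euc d) (b s : ℝ),
      deriv (fun t => f (2 * t + b)) s = (2 : ℝ) • deriv f (2 * s + b) := by
    intro f b s
    have := deriv_comp_mul_left (2 : ℝ) (fun t => f (t + b)) s
    rw [this, deriv_comp_add_const]
  have i1 : ∫ t in (0 : ℝ)..(1 / 2), Fmet D π ε c (g t) (deriv g t) =
      ∫ t in (0 : ℝ)..1, Fmet D π ε c (γ t) (deriv γ t) := by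
    have : ∫ t in (0 : ℝ)..(1 / 2), Fmet D π ε c (g t) (deriv g t) = ∫ t in (0 : ℝ)..(1 / 2),
        2 * (fun t => Fmet D π ε c (γ t) (deriv γ t)) (2 * t + 0) := by
      refine intervalIntegral.integral_congr_Ioo_of_le (by norm_num) fun t ht => ?_
      have hev : g =ᶠ[nhds t] fun t => γ (2 * t + 0) :=
        e1.eventuallyEq_of_mem (Icc_mem_nhds ht.1 ht.2)
      simp only
      rw [hev.deriv_eq, hev.eq_of_nhds, dcomp, Fmet_smul]
      norm_num
    rw [this, intervalIntegral.integral_const_mul, intervalIntegral.integral_comp_mul_add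
      (fun t => Fmet D π ε c (γ t) (deriv γ t)) two_ne_zero]
    norm_num
    ring
  have i2 : ∫ t in (1 / 2 : ℝ)..1, Fmet D π ε c (g t) (deriv g t) =
      ∫ t in (0 : ℝ)..1, Fmet D π ε c (γ' t) (deriv γ' t) := by
    have : ∫ t in (1 / 2 : ℝ)..1, Fmet D π ε c (g t) (deriv g t) = ∫ t in (1 / 2 : ℝ)..1,
        2 * (fun t => Fmet D π ε c (γ' t) (deriv γ' t)) (2 * t + -1) := by
      refine intervalIntegral.integral_congr_Ioo_of_le (by norm_num) fun t ht => ?_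
      have hev : g =ᶠ[nhds t] fun t => γ' (2 * t + -1) :=
        e2.eventuallyEq_of_mem (Icc_mem_nhds ht.1 ht.2)
      simp only
      rw [hev.deriv_eq, hev.eq_of_nhds, dcomp, Fmet_smul]
      norm_num
    rw [this, intervalIntegral.integral_const_mul, intervalIntegral.integral_comp_mul_add
      (fun t => Fmet D π ε c (γ' t) (deriv γ' t)) two_ne_zero]
    norm_num
    ring
  have hint := hF.integrable p gD
  refine ⟨g, p, gD, ?_, ?_, ?_⟩
  · rw [e1 ⟨le_rfl, by norm_num⟩]; simpa using h3
  · rw [e2 ⟨by norm_num, le_rfl⟩]; norm_num; exact h4'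
  · rw [← intervalIntegral.integral_add_adjacent_intervals (b := 1 / 2) (hint.mono_set ?_)
      (hint.mono_set ?_), i1, i2]
    · linarith
    all_goals
      rw [uIcc_of_le (by norm_num), uIcc_of_le (by norm_num)]
      exact Icc_subset_Icc (by norm_num) (by norm_num)

lemma Joins.segment_integral {x y : Euc d} {L : ℝ}
    (hD : ∀ θ ∈ Icc (0 : ℝ) 1, x + θ • (y - x) ∈ D)
    (hL : ∫ θ in (0 : ℝ)..1, Fmet D π ε c (x + θ • (y - x)) (y - x) ≤ L) :
    Joins D π ε c x y L := by
  have hder : ∀ θ : ℝ, deriv (fun θ : ℝ => x + θ • (y - x)) θ = y - x := by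
    intro θ
    have : HasDerivAt (fun θ : ℝ => x + θ • (y - x)) ((1 : ℝ) • (y - x)) θ :=
      ((hasDerivAt_id θ).smul_const (y - x)).const_add x
    rw [this.deriv, one_smul]
  have hsm : ContDiff ℝ 1 (fun θ : ℝ => x + θ • (y - x)) := by fun_prop
  refine ⟨fun θ => x + θ • (y - x), ⟨hsm.continuous.continuousOn, 0, ![0, 1], ?_, rfl, rfl,
    fun _ => hsm.contDiffOn⟩, hD, by simp, by simp, ?_⟩
  · intro i j hij
    fin_cases i <;> fin_cases j <;> simp_all
  · simpa only [hder] using hL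

lemma Joins.segment (hF : FillingData D π ε c) {x y : Euc d} {L : ℝ}
    (hD : ∀ θ ∈ Icc (0 : ℝ) 1, x + θ • (y - x) ∈ D)
    (hL : ∀ θ ∈ Icc (0 : ℝ) 1, Fmet D π ε c (x + θ • (y - x)) (y - x) ≤ L) :
    Joins D π ε c x y L := by
  refine Joins.segment_integral hD ?_
  have h := intervalIntegral.norm_integral_le_of_norm_le_const (a := 0) (b := 1) (C := L)
    (f := fun θ => Fmet D π ε c (x + θ • (y - x)) (y - x)) fun θ hθ => by
      rw [uIoc_of_le zero_le_one] at hθ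
      rw [Real.norm_of_nonneg (Fmet_nonneg hF.c0.le _ _)]
      exact hL θ ⟨hθ.1.le, hθ.2⟩
  simpa using (le_abs_self _).trans h

end Basic

/-! ### The lower bound for lengths of curves -/

section Lower

variable {d : ℕ} {D : Set (Euc d)} {π : Euc d → Euc d} {ε c : ℝ}

lemma norm_nvec {x p : Euc d} (h : p ≠ x) : ‖nvec x p‖ = 1 := by
  unfold nvec
  rw [norm_smul, norm_inv, norm_norm, inv_mul_cancel₀ (norm_ne_zero_iff.2 (sub_ne_zero.2 h))]

lemma norm_vN {x p : Euc d} (h : p ≠ x) (v : Euc d) : ‖vN x p v‖ = |⟪v, nvec x p⟫| := by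
  unfold vN
  rw [norm_smul, norm_nvec h, mul_one, Real.norm_eq_abs]

/-- The pointwise estimate behind the lower bound. Here `Q ≥ h - (2 / A) h²`, and the correction
term `-(2 / A) h²` exactly absorbs the contribution of the normal velocity to `ρ'`. -/
lemma potential_deriv_le {A h Q a b ρ' σ : ℝ} (hA : 6 ≤ A) (h0 : 0 < h) (h1 : h ≤ 1)
    (hQ : h - 2 / A * h ^ 2 ≤ Q) (hb : 0 ≤ b) (hρ : |ρ'| ≤ a + b) (hσ : |σ| = a) :
    2 * ((ρ' / A + σ / (2 * h) - 2 / A * σ) / Q) - σ / (2 * h ^ 2) ≤ a / (2 * h ^ 2) + b / h := by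
  have hA0 : 0 < A := by linarith
  have ha : 0 ≤ a := hσ ▸ abs_nonneg σ
  obtain ⟨α, hα⟩ : ∃ α, α = 1 / A := ⟨_, rfl⟩
  have hα0 : 0 < α := by rw [hα]; positivity
  have hα6 : α * 6 ≤ 1 := by
    rw [hα, div_mul_eq_mul_div, div_le_one hA0]; linarith
  have e1 : ρ' / A = α * ρ' := by rw [hα]; ring
  have e2 : 2 / A = 2 * α := by rw [hα]; ring
  rw [e2] at hQ
  have hαh : α * h * 6 ≤ 1 := by nlinarith
  have hQh : h * (2 / 3) ≤ Q := by nlinarith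
  have hQ0 : 0 < Q := by nlinarith
  have hρ2 : ρ' ≤ a + b := (le_abs_self _).trans hρ
  rw [e1, e2]
  have key : 2 * h ^ 2 * (2 * (α * ρ' + σ / (2 * h) - 2 * α * σ)) ≤
      (σ + a + 2 * h * b) * Q := by
    have e3 : 2 * h ^ 2 * (2 * (α * ρ' + σ / (2 * h) - 2 * α * σ)) =
        4 * α * h ^ 2 * ρ' + 2 * h * σ - 8 * α * h ^ 2 * σ := by field_simp; ring
    rw [e3]
    have hp : 0 ≤ 4 * α * h ^ 2 := by positivity
    have h2 := mul_le_mul_of_nonneg_left hρ2 hp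
    have h3 : 4 * α * h ^ 2 * b ≤ 2 * h * b * Q := by
      have : 2 * α * h ≤ Q := by nlinarith
      nlinarith [mul_le_mul_of_nonneg_left this (mul_nonneg (mul_nonneg zero_le_two h0.le) hb)]
    rcases abs_choice σ with hs | hs
    · have hs' : σ = a := by rw [← hσ, hs]
      subst hs'
      nlinarith [mul_le_mul_of_nonneg_left hQ ha]
    · have hs' : σ = -a := by rw [← hσ, hs]; ring
      subst hs'
      have : 12 * α * h ^ 2 * a ≤ 2 * h * a := by
        nlinarith [mul_le_mul_of_nonneg_left hαh (mul_nonneg h0.le ha)]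
      nlinarith
  have e4 : 2 * ((α * ρ' + σ / (2 * h) - 2 * α * σ) / Q) ≤ (σ + a + 2 * h * b) / (2 * h ^ 2) := by
    rw [← mul_div_assoc, div_le_div_iff₀ hQ0 (by positivity)]
    linarith
  have e5 : (σ + a + 2 * h * b) / (2 * h ^ 2) = σ / (2 * h ^ 2) + (a / (2 * h ^ 2) + b / h) := by
    field_simp
    ring
  linarith

/-- The distance to `∂D`, truncated at the width `ε` of the collar. -/
def cut (D : Set (Euc d)) (ε : ℝ) (z : Euc d) : ℝ := min (infDist z (frontier D)) ε

/-- The argument of the main logarithm in the potential, as a function of `ρ = ‖z₀ - z‖` and the truncated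
boundary distance `e`. -/
def potQ (A h₀ ρ e : ℝ) : ℝ := ρ / A + h₀ + √e - 2 / A * e

/-- A potential which is `1`-Lipschitz for `d_F`, as a function of `ρ = ‖z₀ - z‖` and the
truncated boundary distance `e`. -/
def pot (A h₀ ρ e : ℝ) : ℝ := 2 * Real.log (potQ A h₀ ρ e) - Real.log e / 2

lemma potQ_lower {A h₀ ρ e : ℝ} (hA : 6 ≤ A) (hh : 0 ≤ h₀) (hρ : 0 ≤ ρ) (he : 0 < e)
    (he1 : e ≤ 1) : √e - 2 / A * √e ^ 2 ≤ potQ A h₀ ρ e ∧ √e * (2 / 3) ≤ potQ A h₀ ρ e ∧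
      0 < potQ A h₀ ρ e := by
  unfold potQ
  rw [Real.sq_sqrt he.le]
  have hA0 : 0 < A := by linarith
  have h1 : 0 ≤ ρ / A := by positivity
  have h2 : 2 / A ≤ 1 / 3 := by rw [div_le_div_iff₀ hA0 (by norm_num)]; linarith
  have h3 : 0 < √e := Real.sqrt_pos.2 he
  have h4 : e ≤ √e := Real.le_sqrt_of_sq_le (by nlinarith)
  have h5 : 2 / A * e ≤ 1 / 3 * √e := by gcongr
  refine ⟨by linarith, by linarith, by linarith⟩

/-- The constant in the potential: large enough for the collar estimate (`6 ≤ A`) and for the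
estimate outside the collar. -/
def potA (ε c : ℝ) : ℝ := 6 + 3 / (√ε * min c (1 / 2))

lemma potA_ge (hc : 0 < c) : 6 ≤ potA ε c := by
  unfold potA
  have : 0 < min c (1 / 2) := lt_min hc (by norm_num)
  have : 0 ≤ 3 / (√ε * min c (1 / 2)) := by positivity
  linarith

lemma cut_pos (hF : FillingData D π ε c) {z : Euc d} (hz : z ∈ D) : 0 < cut D ε z :=
  lt_min (hF.infDist_pos hz) hF.ε0

/-- The derivative of the truncated boundary distance along a curve is, up to sign, the norm of the
normal component of the velocity inside the collar, and zero outside. -/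
lemma abs_deriv_cut (hF : FillingData D π ε c) {γ : ℝ → Euc d} {t σ : ℝ} {v : Euc d}
    (hD : γ t ∈ D) (hγ : HasDerivAt γ v t) (hσ : HasDerivAt (fun s => cut D ε (γ s)) σ t) :
    (infDist (γ t) (frontier D) < ε → |σ| = ‖vN (γ t) (π (γ t)) v‖) ∧
    (ε ≤ infDist (γ t) (frontier D) → σ = 0) := by
  constructor
  · intro hlt
    obtain ⟨h1, h2, -⟩ := hF.proj (γ t) hlt.le
    have hpos := hF.infDist_pos hD
    set ξ := π (γ t) with hξ
    have hne : γ t - ξ ≠ 0 := by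
      rw [← norm_ne_zero_iff, ← dist_eq_norm, h2]; exact hpos.ne'
    have hn : 0 < ‖γ t - ξ‖ := norm_pos_iff.2 hne
    have hsq : HasDerivAt (fun s => ‖γ s - ξ‖ ^ 2) (2 * ⟪γ t - ξ, v⟫) t := (hγ.sub_const ξ).norm_sq
    have hk : HasDerivAt (fun s => ‖γ s - ξ‖) (⟪γ t - ξ, v⟫ / ‖γ t - ξ‖) t := by
      have := hsq.sqrt (by positivity)
      simp only [Real.sqrt_sq (norm_nonneg _)] at this
      convert! this using 1
      field_simp
    have hmin : IsLocalMin (fun s => ‖γ s - ξ‖ - cut D ε (γ s)) t := by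
      refine Eventually.of_forall fun s => ?_
      have e1 : ‖γ t - ξ‖ - cut D ε (γ t) = 0 := by
        unfold cut
        rw [min_eq_left hlt.le, ← dist_eq_norm, h2, sub_self]
      have e2 : cut D ε (γ s) ≤ ‖γ s - ξ‖ := by
        rw [← dist_eq_norm]
        exact (min_le_left _ _).trans (infDist_le_dist_of_mem h1)
      simp only [e1]
      linarith
    have h0 := hmin.hasDerivAt_eq_zero (hk.sub hσ)
    have hσ' : σ = ⟪γ t - ξ, v⟫ / ‖γ t - ξ‖ := by linarith
    rw [norm_vN (fun h => hne (by rw [h, sub_self])), hσ']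
    unfold nvec
    rw [real_inner_smul_right, ← neg_sub (γ t) ξ, inner_neg_right, norm_neg, mul_neg, abs_neg,
      real_inner_comm, div_eq_inv_mul]
  · intro hge
    have hmax : IsLocalMax (fun s => cut D ε (γ s)) t := by
      refine Eventually.of_forall fun s => ?_
      simp only [cut, min_eq_right hge]
      exact min_le_right _ _
    exact hmax.hasDerivAt_eq_zero hσ

lemma abs_deriv_dist_le {γ : ℝ → Euc d} {t ρ' : ℝ} {v z₀ : Euc d}
    (hγ : HasDerivAt γ v t) (hρ : HasDerivAt (fun s => dist z₀ (γ s)) ρ' t) : |ρ'| ≤ ‖v‖ := by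
  have h1 := hρ.tendsto_slope.abs
  have h2 := hγ.tendsto_slope.norm
  refine le_of_tendsto_of_tendsto' h1 h2 fun s => ?_
  rw [slope_def_field, slope_def_module, norm_smul, abs_div, norm_inv, Real.norm_eq_abs,
    div_eq_inv_mul]
  gcongr
  rw [← dist_eq_norm, dist_comm z₀, dist_comm z₀]
  exact abs_dist_sub_le _ _ _

lemma Fmet_ge_of_le (hF : FillingData D π ε c) {x : Euc d} (v : Euc d)
    (hx : ε ≤ infDist x (frontier D)) : min c (1 / 2) * ‖v‖ ≤ Fmet D π ε c x v := by
  unfold Fmet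
  split_ifs with h
  · have he := le_antisymm h hx
    rw [he]
    have h0 := hF.ε0
    have h1 := hF.ε1
    have hs0 : 0 < √ε := Real.sqrt_pos.2 h0
    have hs1 : √ε ≤ 1 := Real.sqrt_le_one.2 h1.le
    have e1 : ‖vN x (π x) v‖ * (1 / 2) ≤ ‖vN x (π x) v‖ / (2 * ε) := by
      rw [mul_one_div]; gcongr; linarith
    have e2 : ‖vT x (π x) v‖ * (1 / 2) ≤ ‖vT x (π x) v‖ / √ε := by
      rw [mul_one_div]; gcongr; linarith
    have e3 := norm_le_vN_add_vT x (π x) v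
    have e4 : min c (1 / 2) * ‖v‖ ≤ 1 / 2 * ‖v‖ := by gcongr; exact min_le_right _ _
    linarith
  · gcongr
    exact min_le_left _ _

/-- The potential is Lipschitz on compact rectangles away from `e = 0`. -/
lemma pot_lipschitz {A h₀ R m : ℝ} (hA : 6 ≤ A) (hh : 0 ≤ h₀) (hm : 0 < m) (hε : ε ≤ 1) :
    ∃ K, LipschitzOnWith K (fun p : ℝ × ℝ => pot A h₀ p.1 p.2) (Icc 0 R ×ˢ Icc m ε) := by
  have hsmooth : ContDiffOn ℝ 1 (fun p : ℝ × ℝ => pot A h₀ p.1 p.2)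
      (Icc 0 R ×ˢ Icc m ε) := by
    intro p hp
    have hp2 : 0 < p.2 := lt_of_lt_of_le hm hp.2.1
    have hq := (potQ_lower (ρ := p.1) (e := p.2) hA hh hp.1.1 hp2 (hp.2.2.trans hε)).2.2
    refine ContDiffAt.contDiffWithinAt ?_
    unfold pot
    have hQs : ContDiffAt ℝ 1 (fun p : ℝ × ℝ => potQ A h₀ p.1 p.2) p := by
      unfold potQ
      have := (contDiffAt_snd (𝕜 := ℝ) (n := 1) (p := p)).sqrt hp2.ne'
      fun_prop
    exact (contDiffAt_const.mul (hQs.log hq.ne')).sub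
      (((contDiffAt_snd).log hp2.ne').div_const 2)
  exact hsmooth.exists_lipschitzOnWith (by decide)
    ((convex_Icc _ _).prod (convex_Icc _ _)) (isCompact_Icc.prod isCompact_Icc)

/-- The potential grows at most by the `F`-length along every admissible curve. -/
lemma pot_sub_le (hF : FillingData D π ε c) {x y z₀ : Euc d} {L h₀ : ℝ} (hh : 0 ≤ h₀)
    (hJ : Joins D π ε c x y L) :
    pot (potA ε c) h₀ (dist z₀ y) (cut D ε y) - pot (potA ε c) h₀ (dist z₀ x) (cut D ε x) ≤ L := by
  obtain ⟨γ, h1, h2, rfl, rfl, h5⟩ := hJ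
  refine le_trans ?_ h5
  have hint := hF.integrable h1 h2
  obtain ⟨K, hK⟩ := h1.exists_lipschitz
  obtain ⟨m, hm, hmb⟩ := hF.exists_infDist_lower h1.1 h2
  have hA : 6 ≤ potA ε c := potA_ge hF.c0
  have hA0 : 0 < potA ε c := by linarith
  obtain ⟨A, hAdef⟩ : ∃ A, A = potA ε c := ⟨_, rfl⟩
  rw [← hAdef] at hA hA0 ⊢
  have hcutL : LipschitzWith 1 (cut D ε) := (lipschitz_infDist_pt _).min_const ε
  have hρL : LipschitzOnWith (1 * K) (fun s => dist z₀ (γ s)) (Icc 0 1) :=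
    (LipschitzWith.dist_right z₀).comp_lipschitzOnWith hK
  have heL : LipschitzOnWith (1 * K) (fun s => cut D ε (γ s)) (Icc 0 1) :=
    hcutL.comp_lipschitzOnWith hK
  obtain ⟨R, hR⟩ := (isCompact_Icc.image_of_continuousOn hρL.continuousOn).bddAbove
  have hcm : ∀ s ∈ Icc (0 : ℝ) 1, min m ε ≤ cut D ε (γ s) := fun s hs =>
    min_le_min (hmb s hs) le_rfl
  have hm' : 0 < min m ε := lt_min hm hF.ε0
  obtain ⟨K', hK'⟩ := pot_lipschitz (ε := ε) (R := R) hA hh hm' hF.ε1.le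
  obtain ⟨K₂, hpair⟩ : ∃ K₂, LipschitzOnWith K₂
      (fun s => (dist z₀ (γ s), cut D ε (γ s))) (Icc 0 1) := ⟨_, hρL.prodMk heL⟩
  have hmaps : MapsTo (fun s => (dist z₀ (γ s), cut D ε (γ s))) (Icc 0 1)
      (Icc 0 R ×ˢ Icc (min m ε) ε) := by
    intro s hs
    exact ⟨⟨dist_nonneg, hR ⟨s, hs, rfl⟩⟩, hcm s hs, min_le_right _ _⟩
  have hcomp := hK'.comp hpair hmaps
  have hfL : LipschitzOnWith (K' * K₂)
      (fun s => pot A h₀ (dist z₀ (γ s)) (cut D ε (γ s))) (uIcc 0 1) := by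
    rw [uIcc_of_le zero_le_one]
    exact hcomp
  have hac := hfL.absolutelyContinuousOnInterval
  rw [← hac.integral_deriv_eq_sub (a := 0) (b := 1)]
  refine intervalIntegral.integral_mono_ae_restrict zero_le_one hac.intervalIntegrable_deriv hint ?_
  have hae : ∀ᵐ t : ℝ, t ∈ Icc (0 : ℝ) 1 → DifferentiableWithinAt ℝ γ (Icc 0 1) t :=
    hK.ae_differentiableWithinAt_of_mem_real
  have hae1 : ∀ᵐ t : ℝ, t ∈ Icc (0 : ℝ) 1 →
      DifferentiableWithinAt ℝ (fun s => dist z₀ (γ s)) (Icc 0 1) t :=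
    hρL.ae_differentiableWithinAt_of_mem_real
  have hae2 : ∀ᵐ t : ℝ, t ∈ Icc (0 : ℝ) 1 →
      DifferentiableWithinAt ℝ (fun s => cut D ε (γ s)) (Icc 0 1) t :=
    heL.ae_differentiableWithinAt_of_mem_real
  have hne0 : ∀ᵐ t : ℝ, t ≠ 0 := MeasureTheory.Measure.ae_ne _ 0
  have hne1 : ∀ᵐ t : ℝ, t ≠ 1 := MeasureTheory.Measure.ae_ne _ 1
  rw [EventuallyLE, MeasureTheory.ae_restrict_iff' measurableSet_Icc]
  filter_upwards [hae, hae1, hae2, hne0, hne1] with t k1 k2 k3 t0 t1 ht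
  have hnh : Icc (0 : ℝ) 1 ∈ nhds t :=
    Icc_mem_nhds (lt_of_le_of_ne ht.1 t0.symm) (lt_of_le_of_ne ht.2 t1)
  have dγ := ((k1 ht).differentiableAt hnh).hasDerivAt
  have dρ := ((k2 ht).differentiableAt hnh).hasDerivAt
  have de := ((k3 ht).differentiableAt hnh).hasDerivAt
  set v := deriv γ t
  set ρ' := deriv (fun s => dist z₀ (γ s)) t
  set σ := deriv (fun s => cut D ε (γ s)) t
  have hρ' : |ρ'| ≤ ‖v‖ := abs_deriv_dist_le dγ dρ
  obtain ⟨c1, c2⟩ := abs_deriv_cut hF (h2 t ht) dγ de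
  have hep : 0 < cut D ε (γ t) := cut_pos hF (h2 t ht)
  have hsp : 0 < √(cut D ε (γ t)) := Real.sqrt_pos.2 hep
  have he1 : cut D ε (γ t) ≤ 1 := (min_le_right _ _).trans hF.ε1.le
  obtain ⟨q1, q2, q3⟩ := potQ_lower (ρ := dist z₀ (γ t)) hA hh dist_nonneg hep he1
  have dQ : HasDerivAt (fun s => potQ A h₀ (dist z₀ (γ s)) (cut D ε (γ s)))
      (ρ' / A + σ / (2 * √(cut D ε (γ t))) - 2 / A * σ) t :=
    (((dρ.div_const A).add_const h₀).add (de.sqrt hep.ne')).sub (de.const_mul (2 / A))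
  have df : HasDerivAt (fun s => pot A h₀ (dist z₀ (γ s)) (cut D ε (γ s)))
      (2 * ((ρ' / A + σ / (2 * √(cut D ε (γ t))) - 2 / A * σ) /
        potQ A h₀ (dist z₀ (γ t)) (cut D ε (γ t))) - σ / (2 * √(cut D ε (γ t)) ^ 2)) t := by
    have := ((dQ.log q3.ne').const_mul 2).sub ((de.log hep.ne').div_const 2)
    convert! this using 2
    rw [Real.sq_sqrt hep.le]
    field_simp
  rw [df.deriv]
  rcases lt_or_ge (infDist (γ t) (frontier D)) ε with hlt | hge
  · have hcut : cut D ε (γ t) = infDist (γ t) (frontier D) := min_eq_left hlt.le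
    have := potential_deriv_le hA hsp (Real.sqrt_le_one.2 he1) q1
      (norm_nonneg (vT (γ t) (π (γ t)) v)) (hρ'.trans (norm_le_vN_add_vT (γ t) (π (γ t)) v))
      (c1 hlt)
    refine this.trans_eq ?_
    unfold Fmet
    rw [if_pos hlt.le, Real.sq_sqrt hep.le, hcut]
  · rw [c2 hge]
    have hcut : cut D ε (γ t) = ε := min_eq_right hge
    refine le_trans ?_ (Fmet_ge_of_le hF v hge)
    rw [hcut] at q2 q3 ⊢
    set Q := potQ A h₀ (dist z₀ (γ t)) ε
    have hκ : 0 < min c (1 / 2) := lt_min hF.c0 (by norm_num)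
    have hs : 0 < √ε := Real.sqrt_pos.2 hF.ε0
    have hAQ : 2 ≤ min c (1 / 2) * (A * Q) := by
      have e1 : 3 / (√ε * min c (1 / 2)) ≤ A := by rw [hAdef]; unfold potA; linarith
      rw [div_le_iff₀ (by positivity)] at e1
      have e2 := mul_le_mul_of_nonneg_left q2 (mul_nonneg hκ.le hA0.le)
      nlinarith
    have e3 : 2 * ((ρ' / A + 0 / (2 * √ε) - 2 / A * 0) / Q) - 0 / (2 * √ε ^ 2) =
        2 * ρ' / (A * Q) := by field_simp; ring
    rw [e3, div_le_iff₀ (by positivity)]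
    have e4 : ρ' ≤ ‖v‖ := (le_abs_self _).trans hρ'
    nlinarith [mul_le_mul_of_nonneg_right hAQ (norm_nonneg v)]

end Lower

/-! ### Interior and exterior tangent balls -/

section Balls

variable {d : ℕ} {D : Set (Euc d)}

/-- `n` is a unit vector for which the balls of radius `r` tangent to `∂D` at `ξ` lie in `D`
and in the complement of `D` respectively; thus `n` is the outer unit normal at `ξ`. -/
def TwoBalls (D : Set (Euc d)) (r : ℝ) (ξ n : Euc d) : Prop :=
  ‖n‖ = 1 ∧ ball (ξ - r • n) r ⊆ D ∧ Disjoint (ball (ξ + r • n) r) D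

/-- Membership in a tangent ball in terms of the inner product with the normal. -/
lemma mem_tangent_ball {r : ℝ} (hr : 0 < r) {ξ n y : Euc d} (hn : ‖n‖ = 1) :
    y ∈ ball (ξ + r • n) r ↔ ‖y - ξ‖ ^ 2 < 2 * r * ⟪y - ξ, n⟫ := by
  rw [mem_ball, dist_eq_norm, ← sub_sub, ← sq_lt_sq₀ (norm_nonneg _) hr.le, norm_sub_sq_real,
    real_inner_smul_right, norm_smul, hn, Real.norm_of_nonneg hr.le]
  constructor <;> intro h <;> linarith

lemma taylor_bound {u : Euc d → ℝ} {s : Set (Euc d)} {K : NNReal} (hs : Convex ℝ s)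
    (hdiff : ∀ z ∈ s, DifferentiableAt ℝ u z) (hK : LipschitzOnWith K (fderiv ℝ u) s)
    {ξ y : Euc d} (hξ : ξ ∈ s) (hy : y ∈ s) :
    |u y - u ξ - fderiv ℝ u ξ (y - ξ)| ≤ K * ‖y - ξ‖ ^ 2 := by
  have hseg : segment ℝ ξ y ⊆ s := hs.segment_subset hξ hy
  have h := (convex_segment ξ y).norm_image_sub_le_of_norm_hasFDerivWithin_le' (𝕜 := ℝ)
    (f := u) (f' := fderiv ℝ u) (φ := fderiv ℝ u ξ) (C := K * ‖y - ξ‖)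
    (fun z hz => (hdiff z (hseg hz)).hasFDerivAt.hasFDerivWithinAt)
    (fun z hz => by
      refine (hK.norm_sub_le (hseg hz) hξ).trans ?_
      gcongr
      rw [norm_sub_rev z, norm_sub_rev y, ← dist_eq_norm, ← dist_eq_norm]
      have := dist_add_dist_of_mem_segment hz
      linarith [dist_nonneg (x := z) (y := y)])
    (left_mem_segment ℝ ξ y) (right_mem_segment ℝ ξ y)
  rw [Real.norm_eq_abs] at h
  linarith

lemma exists_twoBalls_local {U : Set (Euc d)} {u : Euc d → ℝ} (hU : IsOpen U)
    (hfU : frontier D ⊆ U) (hu : ContDiffOn ℝ 2 u U) (hDU : D ∩ U = {x | x ∈ U ∧ u x < 0})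
    (hf0 : frontier D = {x | x ∈ U ∧ u x = 0}) {ξ₀ : Euc d} (hξ₀ : ξ₀ ∈ frontier D)
    (hne : fderiv ℝ u ξ₀ ≠ 0) :
    ∃ r₀ > 0, ∃ ρ > 0, ∀ ξ ∈ frontier D, ξ ∈ ball ξ₀ ρ → ∀ r, 0 < r → r ≤ r₀ →
      ∃ n, TwoBalls D r ξ n := by
  have hU0 : U ∈ nhds ξ₀ := hU.mem_nhds (hfU hξ₀)
  have hc2 : ContDiffAt ℝ 2 u ξ₀ := hu.contDiffAt hU0
  have hc1 : ContDiffAt ℝ 1 (fderiv ℝ u) ξ₀ := hc2.fderiv_right (by norm_num)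
  obtain ⟨K, t, ht, hK⟩ := hc1.exists_lipschitzOnWith
  set m := ‖fderiv ℝ u ξ₀‖ / 2 with hm
  have hm0 : 0 < m := by have := norm_pos_iff.2 hne; positivity
  have hev : ∀ᶠ z in nhds ξ₀, m < ‖fderiv ℝ u z‖ :=
    hc1.continuousAt.norm.eventually (lt_mem_nhds (by rw [hm]; linarith))
  obtain ⟨ρ, hρ, hball⟩ := Metric.mem_nhds_iff.1 (inter_mem (inter_mem hU0 ht) hev)
  have hdiff : ∀ z ∈ ball ξ₀ ρ, DifferentiableAt ℝ u z := fun z hz =>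
    (hu.contDiffAt (hU.mem_nhds (hball hz).1.1)).differentiableAt (by norm_num)
  have hKb : LipschitzOnWith K (fderiv ℝ u) (ball ξ₀ ρ) := hK.mono fun z hz => (hball hz).1.2
  refine ⟨min (ρ / 4) (m / (2 * (K + 1))), by positivity, ρ / 2, by positivity, ?_⟩
  intro ξ hξ hξb r hr hr'
  have hξB : ξ ∈ ball ξ₀ ρ := ball_subset_ball (by linarith) hξb
  have hu0 : u ξ = 0 := by rw [hf0] at hξ; exact hξ.2
  have hg : m < ‖fderiv ℝ u ξ‖ := (hball hξB).2
  set g := (InnerProductSpace.toDual ℝ (Euc d)).symm (fderiv ℝ u ξ) with hgdef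
  have hgn : ‖g‖ = ‖fderiv ℝ u ξ‖ := LinearIsometryEquiv.norm_map _ _
  have hg0 : 0 < ‖g‖ := by rw [hgn]; linarith
  have hgi : ∀ v, fderiv ℝ u ξ v = ⟪g, v⟫ := fun v => by
    rw [hgdef, InnerProductSpace.toDual_symm_apply]
  set n := ‖g‖⁻¹ • g with hn
  have hn1 : ‖n‖ = 1 := by
    rw [hn, norm_smul, norm_inv, norm_norm, inv_mul_cancel₀ hg0.ne']
  have hgn' : g = ‖g‖ • n := by rw [hn, smul_smul, mul_inv_cancel₀ hg0.ne', one_smul]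
  have hfd : ∀ v, fderiv ℝ u ξ v = ‖g‖ * ⟪v, n⟫ := fun v => by
    rw [hgi, hgn', real_inner_smul_left, ← hgn', real_inner_comm]
  have hrK : 2 * r * K < ‖g‖ := by
    have h1 : r * (2 * (K + 1)) ≤ m := (le_div_iff₀ (by positivity)).1 (hr'.trans (min_le_right _ _))
    rw [hgn]
    nlinarith
  -- `u` has the sign of the linear term on both tangent balls
  have hin : ∀ (w : Euc d) (_ : ‖w‖ = 1) (y : Euc d), y ∈ ball (ξ + r • w) r → y ∈ ball ξ₀ ρ := by
    intro w hw y hy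
    rw [mem_ball] at hy hξb ⊢
    have e1 : dist (ξ + r • w) ξ = r := by
      rw [dist_eq_norm, add_sub_cancel_left, norm_smul, hw, Real.norm_of_nonneg hr.le, mul_one]
    have e2 := dist_triangle4 y (ξ + r • w) ξ ξ₀
    have e3 : r ≤ ρ / 4 := hr'.trans (min_le_left _ _)
    linarith
  have hbound : ∀ y, ∀ a : ℝ, ‖y - ξ‖ ^ 2 < 2 * r * a → K * ‖y - ξ‖ ^ 2 < ‖g‖ * a := by
    intro y a hya
    have ha : 0 < a := by
      by_contra hcon
      nlinarith [sq_nonneg ‖y - ξ‖]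
    have h1 : (K : ℝ) * ‖y - ξ‖ ^ 2 ≤ K * (2 * r * a) := by gcongr
    nlinarith
  refine ⟨n, hn1, fun y hy => ?_, Set.disjoint_left.2 fun y hy hyD => ?_⟩
  · have hy' : y ∈ ball (ξ + r • (-n)) r := by rwa [smul_neg, ← sub_eq_add_neg]
    have hyB := hin (-n) (by rwa [norm_neg]) y hy'
    rw [mem_tangent_ball hr (by rwa [norm_neg])] at hy'
    have ht := (abs_le.1 (taylor_bound (convex_ball _ _) hdiff hKb hξB hyB)).2
    have hb := hbound y _ hy'
    rw [hu0, hfd] at ht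
    rw [inner_neg_right] at hb
    have : y ∈ D ∩ U := by
      rw [hDU]
      exact ⟨(hball hyB).1.1, by linarith⟩
    exact this.1
  · have hyB := hin n hn1 y hy
    rw [mem_tangent_ball hr hn1] at hy
    have ht := (abs_le.1 (taylor_bound (convex_ball _ _) hdiff hKb hξB hyB)).1
    have hb := hbound y _ hy
    rw [hu0, hfd] at ht
    have : y ∈ D ∩ U := ⟨hyD, (hball hyB).1.1⟩
    rw [hDU] at this
    have := this.2
    linarith

/-- A compact `C²` boundary satisfies the interior and exterior ball conditions uniformly. -/
lemma exists_twoBalls {U : Set (Euc d)} {u : Euc d → ℝ} (hcpt : IsCompact (frontier D))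
    (hU : IsOpen U) (hfU : frontier D ⊆ U) (hu : ContDiffOn ℝ 2 u U)
    (hDU : D ∩ U = {x | x ∈ U ∧ u x < 0}) (hf0 : frontier D = {x | x ∈ U ∧ u x = 0})
    (hne : ∀ x ∈ frontier D, fderiv ℝ u x ≠ 0) {ε : ℝ} (hε : 0 < ε) :
    ∃ r, 0 < r ∧ r ≤ ε ∧ ∀ ξ ∈ frontier D, ∃ n, TwoBalls D r ξ n := by
  obtain ⟨r₀, hr₀, h⟩ : ∃ r₀ > 0, ∀ ξ ∈ frontier D, ∀ r, 0 < r → r ≤ r₀ → ∃ n, TwoBalls D r ξ n := by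
    have := hcpt.induction_on (p := fun S => ∃ r₀ > 0, ∀ ξ ∈ frontier D ∩ S, ∀ r, 0 < r → r ≤ r₀ →
      ∃ n, TwoBalls D r ξ n) ⟨1, one_pos, by simp⟩
      (fun s t hst ⟨r₀, h0, h⟩ => ⟨r₀, h0, fun ξ hξ => h ξ ⟨hξ.1, hst hξ.2⟩⟩)
      (fun s t ⟨r₁, h1, k1⟩ ⟨r₂, h2, k2⟩ => ⟨min r₁ r₂, lt_min h1 h2, fun ξ hξ r hr hr' => by
        rcases hξ with ⟨hξf, hξ | hξ⟩
        · exact k1 ξ ⟨hξf, hξ⟩ r hr (hr'.trans (min_le_left _ _))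
        · exact k2 ξ ⟨hξf, hξ⟩ r hr (hr'.trans (min_le_right _ _))⟩)
      (fun ξ₀ hξ₀ => by
        obtain ⟨r₀, h0, ρ, hρ, h⟩ := exists_twoBalls_local hU hfU hu hDU hf0 hξ₀ (hne ξ₀ hξ₀)
        exact ⟨ball ξ₀ ρ, mem_nhdsWithin_of_mem_nhds (ball_mem_nhds _ hρ), r₀, h0,
          fun ξ hξ => h ξ hξ.1 hξ.2⟩)
    simpa only [inter_self] using this
  exact ⟨min r₀ ε, lt_min hr₀ hε, min_le_right _ _, fun ξ hξ =>
    h ξ hξ _ (lt_min hr₀ hε) (min_le_left _ _)⟩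

end Balls

/-! ### Geometry of the collar -/

section Collar

variable {d : ℕ} {D : Set (Euc d)} {π : Euc d → Euc d} {ε c r : ℝ}

/-- `ν ξ` is the outer unit normal at every boundary point `ξ`, with tangent balls of radius `r`
on both sides; `r` does not exceed the width of the collar. -/
structure NormalField (D : Set (Euc d)) (ε r : ℝ) (ν : Euc d → Euc d) : Prop where
  pos : 0 < r
  le : r ≤ ε
  balls : ∀ ξ ∈ frontier D, TwoBalls D r ξ (ν ξ)

variable {ν : Euc d → Euc d}

lemma NormalField.norm_eq (hν : NormalField D ε r ν) {ξ : Euc d} (hξ : ξ ∈ frontier D) :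
    ‖ν ξ‖ = 1 := (hν.balls ξ hξ).1

lemma add_le_dist_center (hF : FillingData D π ε c) (hν : NormalField D ε r ν) {x ξ : Euc d}
    (hx : x ∈ D) (hξ : ξ ∈ frontier D) :
    infDist x (frontier D) + r ≤ dist x (ξ + r • ν ξ) := by
  rw [← disjoint_ball_ball_iff (hF.infDist_pos hx) hν.pos]
  exact ((hν.balls ξ hξ).2.2.symm).mono_left (hF.ball_subset hx)

/-- Near the boundary a point is recovered from its projection and its boundary distance. -/
lemma eq_proj_sub (hF : FillingData D π ε c) (hν : NormalField D ε r ν) {x : Euc d}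
    (hx : x ∈ D) (hxε : infDist x (frontier D) ≤ ε) :
    x = π x - infDist x (frontier D) • ν (π x) := by
  obtain ⟨h1, h2, -⟩ := hF.proj x hxε
  have h3 := add_le_dist_center hF hν hx h1
  have hδ := hF.infDist_pos hx
  have hr := hν.pos
  have hn := hν.norm_eq h1
  set δ := infDist x (frontier D)
  set ξ := π x
  set n := ν ξ
  rw [dist_eq_norm] at h2 h3
  have h4 := (sq_le_sq₀ (by positivity) (norm_nonneg _)).2 h3
  rw [← sub_sub, norm_sub_sq_real, real_inner_smul_right, norm_smul, hn,
    Real.norm_of_nonneg hr.le, h2] at h4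
  have h5 : ⟪x - ξ, n⟫ ≤ -δ := by
    by_contra hcon
    nlinarith
  have h6 : ‖(x - ξ) + δ • n‖ ^ 2 ≤ 0 := by
    rw [norm_add_sq_real, real_inner_smul_right, norm_smul, hn, Real.norm_of_nonneg hδ.le, h2]
    nlinarith
  have h7 : (x - ξ) + δ • n = 0 := by
    rw [← norm_eq_zero, ← sq_eq_zero_iff]
    exact le_antisymm h6 (sq_nonneg _)
  calc x = ((x - ξ) + δ • n) + (ξ - δ • n) := by abel
    _ = ξ - δ • n := by rw [h7, zero_add]

lemma nvec_proj (hF : FillingData D π ε c) (hν : NormalField D ε r ν) {x : Euc d}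
    (hx : x ∈ D) (hxε : infDist x (frontier D) ≤ ε) : nvec x (π x) = ν (π x) := by
  obtain ⟨h1, h2, -⟩ := hF.proj x hxε
  have hδ := hF.infDist_pos hx
  have h3 : π x - x = infDist x (frontier D) • ν (π x) := by
    have := eq_proj_sub hF hν hx hxε
    rw [eq_sub_iff_add_eq] at this
    rw [← this, add_sub_cancel_left, this]
  unfold nvec
  rw [← dist_eq_norm, dist_comm, h2, h3, smul_smul, inv_mul_cancel₀ hδ.ne', one_smul]

/-- Points on the inner normal at `ξ` up to height `r` have `ξ` as nearest boundary point. -/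
lemma normal_point (hF : FillingData D π ε c) (hν : NormalField D ε r ν) {ξ : Euc d}
    (hξ : ξ ∈ frontier D) {t : ℝ} (ht : 0 < t) (htr : t ≤ r) :
    ξ - t • ν ξ ∈ D ∧ infDist (ξ - t • ν ξ) (frontier D) = t ∧ π (ξ - t • ν ξ) = ξ := by
  have hn := hν.norm_eq hξ
  have hb := (hν.balls ξ hξ).2.1
  have hsub : ball (ξ - t • ν ξ) t ⊆ D := by
    refine (ball_subset_ball' ?_).trans hb
    have : ξ - t • ν ξ - (ξ - r • ν ξ) = (r - t) • ν ξ := by rw [sub_smul]; abel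
    rw [dist_eq_norm, this, norm_smul, hn, Real.norm_of_nonneg (by linarith)]
    linarith
  have hd : dist (ξ - t • ν ξ) ξ = t := by
    rw [dist_eq_norm, sub_sub_cancel_left, norm_neg, norm_smul, hn, Real.norm_of_nonneg ht.le,
      mul_one]
  have hi : infDist (ξ - t • ν ξ) (frontier D) = t := by
    refine le_antisymm ((infDist_le_dist_of_mem hξ).trans_eq hd) ?_
    refine (le_infDist hF.front).2 fun {y} hy => ?_
    by_contra hcon
    rw [not_le, dist_comm] at hcon
    exact hF.notMem_frontier (hsub (mem_ball.2 hcon)) hy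
  refine ⟨hsub (mem_ball_self ht), hi, ?_⟩
  exact ((hF.proj _ (by rw [hi]; exact htr.trans hν.le)).2.2 ξ hξ (by rw [hd, hi])).symm

/-- The tangent balls force the normal field to be Lipschitz. -/
lemma normal_lipschitz (hν : NormalField D ε r ν) {ξ η : Euc d} (hξ : ξ ∈ frontier D)
    (hη : η ∈ frontier D) : ‖ν ξ - ν η‖ ≤ ‖ξ - η‖ / r := by
  have hr := hν.pos
  have key : ∀ {ξ η : Euc d}, ξ ∈ frontier D → η ∈ frontier D →
      (r + r) ^ 2 ≤ ‖(ξ - η) - r • (ν ξ + ν η)‖ ^ 2 := by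
    intro ξ η hξ hη
    have h1 := (hν.balls ξ hξ).2.1
    have h2 := (hν.balls η hη).2.2
    have h3 := (disjoint_ball_ball_iff hr hr).1 (h2.symm.mono_left h1)
    rw [dist_eq_norm] at h3
    have e : ξ - r • ν ξ - (η + r • ν η) = (ξ - η) - r • (ν ξ + ν η) := by
      rw [smul_add]; abel
    rw [e] at h3
    exact pow_le_pow_left₀ (by positivity) h3 2
  have k1 := key hξ hη
  have k2 := key hη hξ
  rw [← neg_sub ξ η, add_comm (ν η)] at k2
  rw [norm_sub_sq_real, norm_smul, real_inner_smul_right, Real.norm_of_nonneg hr.le] at k1 k2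
  rw [norm_neg, inner_neg_left] at k2
  have p := parallelogram_law_with_norm ℝ (ν ξ) (ν η)
  rw [hν.norm_eq hξ, hν.norm_eq hη] at p
  rw [le_div_iff₀ hr, ← sq_le_sq₀ (by positivity) (by positivity)]
  nlinarith

/-! ### Moving along normals -/

lemma vertical_aux (hF : FillingData D π ε c) (hν : NormalField D ε r ν) {ξ : Euc d}
    (hξ : ξ ∈ frontier D) {a b s : ℝ} (ha : 0 < a) (har : a ≤ r) (hb : 0 < b) (hbr : b ≤ r)
    (hs : s * (b - a) = |b - a|) :
    Joins D π ε c (ξ - a • ν ξ) (ξ - b • ν ξ) (s / 2 * (Real.log b - Real.log a)) := by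
  have hpt : ∀ θ : ℝ, (ξ - a • ν ξ) + θ • ((ξ - b • ν ξ) - (ξ - a • ν ξ)) =
      ξ - (a + θ * (b - a)) • ν ξ := by
    intro θ; module
  have hvec : (ξ - b • ν ξ) - (ξ - a • ν ξ) = (a - b) • ν ξ := by module
  have hpos : ∀ θ ∈ Icc (0 : ℝ) 1, 0 < a + θ * (b - a) ∧ a + θ * (b - a) ≤ r := by
    rintro θ ⟨h0, h1⟩
    constructor
    · rcases eq_or_lt_of_le h0 with h | h
      · rw [← h]; linarith
      · nlinarith [mul_pos h hb, mul_nonneg (sub_nonneg.2 h1) ha.le]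
    · nlinarith [mul_nonneg h0 (sub_nonneg.2 hbr),
        mul_nonneg (sub_nonneg.2 h1) (sub_nonneg.2 har)]
  have hn := hν.norm_eq hξ
  have hval : ∀ θ ∈ Icc (0 : ℝ) 1,
      Fmet D π ε c ((ξ - a • ν ξ) + θ • ((ξ - b • ν ξ) - (ξ - a • ν ξ)))
        ((ξ - b • ν ξ) - (ξ - a • ν ξ)) = s / 2 * ((b - a) / (a + θ * (b - a))) := by
    intro θ hθ
    obtain ⟨p1, p2⟩ := hpos θ hθ
    obtain ⟨q1, q2, q3⟩ := normal_point hF hν hξ p1 p2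
    have q4 : infDist (ξ - (a + θ * (b - a)) • ν ξ) (frontier D) ≤ ε := by
      rw [q2]; exact p2.trans hν.le
    have q5 := nvec_proj hF hν q1 q4
    rw [hpt, hvec]
    unfold Fmet
    rw [if_pos q4]
    have e1 : vN (ξ - (a + θ * (b - a)) • ν ξ) (π (ξ - (a + θ * (b - a)) • ν ξ)) ((a - b) • ν ξ)
        = (a - b) • ν ξ := by
      unfold vN
      rw [q5, q3, real_inner_smul_left, real_inner_self_eq_norm_sq, hn]
      norm_num
    rw [vT, e1, q2, sub_self, norm_zero, zero_div, add_zero, norm_smul, hn, Real.norm_eq_abs,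
      abs_sub_comm, ← hs]
    field_simp
  refine Joins.segment_integral (fun θ hθ => ?_) ?_
  · rw [hpt]
    exact (normal_point hF hν hξ (hpos θ hθ).1 (hpos θ hθ).2).1
  · have e : ∫ θ in (0 : ℝ)..1, Fmet D π ε c ((ξ - a • ν ξ) + θ • ((ξ - b • ν ξ) - (ξ - a • ν ξ)))
        ((ξ - b • ν ξ) - (ξ - a • ν ξ)) =
        ∫ θ in (0 : ℝ)..1, s / 2 * ((b - a) / (a + θ * (b - a))) :=
      intervalIntegral.integral_congr fun θ hθ => hval θ (by rwa [uIcc_of_le zero_le_one] at hθ)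
    rw [e, intervalIntegral.integral_eq_sub_of_hasDerivAt
      (f := fun θ => s / 2 * Real.log (a + θ * (b - a)))]
    · apply le_of_eq; simp; ring
    · intro θ hθ
      rw [uIcc_of_le zero_le_one] at hθ
      have h1 : HasDerivAt (fun θ : ℝ => a + θ * (b - a)) (1 * (b - a)) θ :=
        ((hasDerivAt_id θ).mul_const (b - a)).const_add a
      rw [one_mul] at h1
      exact (h1.log (hpos θ hθ).1.ne').const_mul (s / 2)
    · refine ContinuousOn.intervalIntegrable ?_
      rw [uIcc_of_le zero_le_one]
      refine continuousOn_const.mul (continuousOn_const.div (by fun_prop) fun θ hθ => ?_)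
      exact (hpos θ hθ).1.ne'

/-- A point of the collar can be moved along its normal up to height `t`, at logarithmic cost. -/
lemma exists_lift (hF : FillingData D π ε c) (hν : NormalField D ε r ν) {x : Euc d} (hx : x ∈ D)
    {t : ℝ} (hxt : infDist x (frontier D) ≤ t) (htr : t ≤ r) :
    ∃ x' ∈ D, infDist x' (frontier D) = t ∧ dist x x' ≤ t ∧
      Joins D π ε c x x' ((Real.log t - Real.log (infDist x (frontier D))) / 2) ∧
      Joins D π ε c x' x ((Real.log t - Real.log (infDist x (frontier D))) / 2) := by
  have hδ := hF.infDist_pos hx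
  have hxε : infDist x (frontier D) ≤ ε := hxt.trans (htr.trans hν.le)
  have hxeq := eq_proj_sub hF hν hx hxε
  have hξ := (hF.proj x hxε).1
  set δ := infDist x (frontier D)
  set ξ := π x
  have ht : 0 < t := hδ.trans_le hxt
  obtain ⟨h1, h2, -⟩ := normal_point hF hν hξ ht htr
  refine ⟨ξ - t • ν ξ, h1, h2, ?_, ?_, ?_⟩
  · have e : ξ - δ • ν ξ - (ξ - t • ν ξ) = (t - δ) • ν ξ := by module
    rw [hxeq, dist_eq_norm, e, norm_smul, hν.norm_eq hξ, Real.norm_of_nonneg (by linarith)]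
    linarith
  · rw [hxeq]
    refine (vertical_aux hF hν hξ (s := 1) hδ (hxt.trans htr) ht htr ?_).mono (le_of_eq (by ring))
    rw [abs_of_nonneg (by linarith), one_mul]
  · rw [hxeq]
    refine (vertical_aux hF hν hξ (s := -1) ht htr hδ (hxt.trans htr) ?_).mono
      (le_of_eq (by ring))
    rw [abs_of_nonpos (by linarith)]; ring

/-! ### Moving across normals -/

/-- The exterior balls keep a segment between two points of height `t` at height at least `t / 2`,
as long as its length is `O(√t)`. -/
lemma half_le_dist (hF : FillingData D π ε c) (hν : NormalField D ε r ν) {x y : Euc d} {t : ℝ}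
    (hx : x ∈ D) (hy : y ∈ D) (hxt : infDist x (frontier D) = t) (hyt : infDist y (frontier D) = t)
    (hs : ‖y - x‖ ^ 2 ≤ 4 * r * t) {θ : ℝ} (hθ : θ ∈ Icc (0 : ℝ) 1) {ζ : Euc d}
    (hζ : ζ ∈ frontier D) : t / 2 ≤ dist (x + θ • (y - x)) ζ := by
  have hr := hν.pos
  have ht : 0 < t := hxt ▸ hF.infDist_pos hx
  have k1 := add_le_dist_center hF hν hx hζ
  have k2 := add_le_dist_center hF hν hy hζ
  rw [hxt] at k1
  rw [hyt] at k2
  set p := ζ + r • ν ζ with hp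
  have hpζ : dist ζ p = r := by
    rw [hp, dist_eq_norm, sub_add_cancel_left, norm_neg, norm_smul, hν.norm_eq hζ,
      Real.norm_of_nonneg hr.le, mul_one]
  have htri := dist_triangle (x + θ • (y - x)) ζ p
  have m1 : (t + r) ^ 2 ≤ ‖x - p‖ ^ 2 := by
    rw [← dist_eq_norm]; exact pow_le_pow_left₀ (by positivity) k1 2
  have m2 : (t + r) ^ 2 ≤ ‖y - p‖ ^ 2 := by
    rw [← dist_eq_norm]; exact pow_le_pow_left₀ (by positivity) k2 2
  have hid : ‖x + θ • (y - x) - p‖ ^ 2 =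
      (1 - θ) * ‖x - p‖ ^ 2 + θ * ‖y - p‖ ^ 2 - θ * (1 - θ) * ‖y - x‖ ^ 2 := by
    have e1 : x + θ • (y - x) - p = (x - p) + θ • (y - x) := by abel
    have e2 : y - p = (x - p) + (y - x) := by abel
    rw [e1, e2, norm_add_sq_real, norm_add_sq_real, real_inner_smul_right, norm_smul,
      Real.norm_eq_abs, mul_pow, sq_abs]
    ring
  have m3 : (r + t / 2) ^ 2 ≤ ‖x + θ • (y - x) - p‖ ^ 2 := by
    rw [hid]
    have a1 := mul_le_mul_of_nonneg_left m1 (sub_nonneg.2 hθ.2)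
    have a2 := mul_le_mul_of_nonneg_left m2 hθ.1
    have a3 : θ * (1 - θ) ≤ 1 / 4 := by nlinarith [sq_nonneg (θ - 1 / 2)]
    have a4 : θ * (1 - θ) * ‖y - x‖ ^ 2 ≤ 1 / 4 * (4 * r * t) := by
      gcongr
    nlinarith
  have m4 := (sq_le_sq₀ (by positivity) (norm_nonneg _)).1 m3
  rw [← dist_eq_norm] at m4
  linarith

/-- A vector joining two points of the same height points at most slightly outwards. -/
lemma inner_normal_le (hF : FillingData D π ε c) (hν : NormalField D ε r ν) {x y : Euc d} {t : ℝ}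
    (hx : x ∈ D) (hy : y ∈ D) (hxt : infDist x (frontier D) = t) (hyt : infDist y (frontier D) = t)
    (htr : t ≤ r) (hs : ‖y - x‖ ^ 2 ≤ 4 * r * t) : ⟪y - x, ν (π x)⟫ ≤ 2 * t := by
  have hr := hν.pos
  have ht : 0 < t := hxt ▸ hF.infDist_pos hx
  have hxε : infDist x (frontier D) ≤ ε := by rw [hxt]; exact htr.trans hν.le
  have hxeq := eq_proj_sub hF hν hx hxε
  have hξ := (hF.proj x hxε).1
  have hn := hν.norm_eq hξ
  have k := add_le_dist_center hF hν hy hξ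
  rw [hyt] at k
  rw [hxt] at hxeq
  set ξ := π x
  set n := ν ξ
  have e : y - (ξ + r • n) = (y - x) - (t + r) • n := by
    have e' : y - x = y - (ξ - t • n) := by rw [← hxeq]
    rw [e']
    module
  rw [dist_eq_norm, e] at k
  have k2 := pow_le_pow_left₀ (by positivity) k 2
  rw [norm_sub_sq_real, real_inner_smul_right, norm_smul, hn, Real.norm_of_nonneg (by positivity)]
    at k2
  by_contra hcon
  rw [not_le] at hcon
  nlinarith [mul_lt_mul_of_pos_left hcon (show 0 < t + r by positivity)]

/-- Two points of equal height `t` at Euclidean distance `O(√t)` are at bounded `F`-distance. -/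
lemma cross (hF : FillingData D π ε c) (hν : NormalField D ε r ν) {x y : Euc d} {t : ℝ}
    (hx : x ∈ D) (hy : y ∈ D) (hxt : infDist x (frontier D) = t) (hyt : infDist y (frontier D) = t)
    (htr : t ≤ r) (hs : ‖y - x‖ ^ 2 ≤ 4 * r * t) : Joins D π ε c x y (24 + 2 * c) := by
  have hr := hν.pos
  have hr1 : r ≤ 1 := hν.le.trans hF.ε1.le
  have ht : 0 < t := hxt ▸ hF.infDist_pos hx
  have hc := hF.c0
  have hxε : infDist x (frontier D) ≤ ε := by rw [hxt]; exact htr.trans hν.le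
  have hyε : infDist y (frontier D) ≤ ε := by rw [hyt]; exact htr.trans hν.le
  have hlow : ∀ θ ∈ Icc (0 : ℝ) 1, ∀ ζ ∈ frontier D, t / 2 ≤ dist (x + θ • (y - x)) ζ :=
    fun θ hθ ζ hζ => half_le_dist hF hν hx hy hxt hyt hs hθ hζ
  have hzD : ∀ θ ∈ Icc (0 : ℝ) 1, x + θ • (y - x) ∈ D := by
    have himg : IsPreconnected ((fun θ : ℝ => x + θ • (y - x)) '' Icc 0 1) :=
      isPreconnected_Icc.image _ (by fun_prop)
    have := hF.subset_of_connected himg (x := x) ⟨0, by simp, by simp⟩ hx (by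
      rintro _ ⟨θ, hθ, rfl⟩ hf
      have := hlow θ hθ _ hf
      rw [dist_self] at this
      linarith)
    exact fun θ hθ => this ⟨θ, hθ, rfl⟩
  refine Joins.segment hF hzD fun θ hθ => ?_
  have hz := hzD θ hθ
  have hτ : t / 2 ≤ infDist (x + θ • (y - x)) (frontier D) :=
    (le_infDist hF.front).2 fun {ζ} hζ => hlow θ hθ ζ hζ
  have hs0 := norm_nonneg (y - x)
  have hzx : dist (x + θ • (y - x)) x ≤ ‖y - x‖ := by
    rw [dist_eq_norm, add_sub_cancel_left, norm_smul, Real.norm_of_nonneg hθ.1]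
    exact mul_le_of_le_one_left hs0 hθ.2
  have hzy : dist (x + θ • (y - x)) y ≤ ‖y - x‖ := by
    have e : x + θ • (y - x) - y = -((1 - θ) • (y - x)) := by module
    rw [dist_eq_norm, e, norm_neg, norm_smul, Real.norm_of_nonneg (sub_nonneg.2 hθ.2)]
    exact mul_le_of_le_one_left hs0 (by linarith [hθ.1])
  set z := x + θ • (y - x) with hzdef
  unfold Fmet
  have hs2 : ‖y - x‖ ^ 2 ≤ 4 * t := by nlinarith
  split_ifs with hzε
  · have hn1 : nvec z (π z) = ν (π z) := nvec_proj hF hν hz hzε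
    obtain ⟨f1, f2, -⟩ := hF.proj z hzε
    obtain ⟨g1, g2, -⟩ := hF.proj x hxε
    obtain ⟨i1, i2, -⟩ := hF.proj y hyε
    have hτs : infDist z (frontier D) ≤ t + ‖y - x‖ := by
      have := infDist_le_infDist_add_dist (s := frontier D) (x := z) (y := x)
      linarith
    have hvN : ‖vN z (π z) (y - x)‖ ≤ 18 * t := by
      rcases lt_or_ge ‖y - x‖ t with hst | hst
      · linarith [norm_vN_le z (π z) (y - x)]
      have lipb : ∀ w, w ∈ frontier D → dist z w ≤ ‖y - x‖ + t →
          ‖y - x‖ * ‖ν (π z) - ν w‖ ≤ 16 * t := by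
        intro w hw hzw
        have h1 := normal_lipschitz hν f1 hw
        have h2 : ‖π z - w‖ ≤ 4 * ‖y - x‖ := by
          rw [← dist_eq_norm]
          have := dist_triangle (π z) z w
          rw [dist_comm (π z) z] at this
          linarith
        rw [le_div_iff₀ hr] at h1
        have h3 : ‖y - x‖ * (‖ν (π z) - ν w‖ * r) ≤ ‖y - x‖ * (4 * ‖y - x‖) :=
          mul_le_mul_of_nonneg_left (h1.trans h2) hs0
        nlinarith
      have hzπx : dist z (π x) ≤ ‖y - x‖ + t := by
        have := dist_triangle z x (π x); linarith
      have hzπy : dist z (π y) ≤ ‖y - x‖ + t := by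
        have := dist_triangle z y (π y); linarith
      have b1 := lipb _ g1 hzπx
      have b2 := lipb _ i1 hzπy
      have c1 := inner_normal_le hF hν hx hy hxt hyt htr hs
      have c2 := inner_normal_le hF hν hy hx hyt hxt htr (by rwa [norm_sub_rev])
      have d1 := real_inner_le_norm (y - x) (ν (π z) - ν (π x))
      have d2 := real_inner_le_norm (x - y) (ν (π z) - ν (π y))
      rw [inner_sub_right] at d1 d2
      rw [norm_sub_rev x y] at d2
      have e : ⟪x - y, ν (π z)⟫ = -⟪y - x, ν (π z)⟫ := by rw [← neg_sub y x, inner_neg_left]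
      unfold vN
      rw [hn1, norm_smul, hν.norm_eq f1, mul_one, Real.norm_eq_abs, abs_le]
      constructor <;> linarith
    have hvT := norm_vT_le z (π z) (y - x)
    have p1 : ‖vN z (π z) (y - x)‖ / (2 * infDist z (frontier D)) ≤ 18 := by
      rw [div_le_iff₀ (by linarith)]
      linarith
    have p2 : ‖vT z (π z) (y - x)‖ / √(infDist z (frontier D)) ≤ 6 := by
      rw [div_le_iff₀ (Real.sqrt_pos.2 (by linarith))]
      have q1 : ‖y - x‖ ≤ 3 * √(infDist z (frontier D)) := by
        rw [← sq_le_sq₀ hs0 (by positivity), mul_pow, Real.sq_sqrt (by linarith)]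
        linarith
      linarith
    linarith
  · have : ‖y - x‖ ≤ 2 := by
      rw [← sq_le_sq₀ hs0 (by norm_num)]
      linarith
    nlinarith

end Collar

/-! ### The upper bound -/

section Upper

variable {d : ℕ} {D : Set (Euc d)} {π : Euc d → Euc d} {ε c r : ℝ} {ν : Euc d → Euc d}

lemma Joins.refl (hF : FillingData D π ε c) {x : Euc d} (hx : x ∈ D) : Joins D π ε c x x 0 := by
  refine Joins.segment hF (fun θ _ => by simpa using hx) fun θ _ => le_of_eq ?_
  have := Fmet_smul (D := D) (π := π) (ε := ε) (c := c) (x + θ • (x - x)) 0 0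
  simpa using this

lemma exists_joins_ball (hF : FillingData D π ε c) {x : Euc d} (hx : x ∈ D) :
    ∃ L, ∀ y ∈ ball x (infDist x (frontier D) / 2), ∀ z ∈ ball x (infDist x (frontier D) / 2),
      Joins D π ε c y z L := by
  have hδ := hF.infDist_pos hx
  set δ := infDist x (frontier D)
  refine ⟨(1 / (2 * (δ / 2)) + 2 / √(δ / 2) + c) * δ, fun y hy z hz => ?_⟩
  have hmem : ∀ θ ∈ Icc (0 : ℝ) 1, y + θ • (z - y) ∈ ball x (δ / 2) := fun θ hθ =>
    (convex_ball x (δ / 2)).add_smul_sub_mem hy hz hθ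
  have hc := hF.c0
  refine Joins.segment hF (fun θ hθ => hF.ball_subset hx
    (ball_subset_ball (by linarith) (hmem θ hθ))) fun θ hθ => ?_
  have h1 : δ / 2 ≤ infDist (y + θ • (z - y)) (frontier D) := by
    have h2 := infDist_le_infDist_add_dist (s := frontier D) (x := x) (y := y + θ • (z - y))
    have h3 := mem_ball'.1 (hmem θ hθ)
    linarith
  refine (Fmet_le (by positivity) hc.le _ _ h1).trans ?_
  gcongr
  rw [← dist_eq_norm]
  have := dist_triangle_right z y x
  rw [mem_ball] at hy hz
  linarith

/-- Points at boundary distance at least `m` are at uniformly bounded `F`-distance. -/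
lemma exists_core_bound (hF : FillingData D π ε c) {m : ℝ} (hm : 0 < m) :
    ∃ C, ∀ x ∈ D, ∀ y ∈ D, m ≤ infDist x (frontier D) → m ≤ infDist y (frontier D) →
      Joins D π ε c x y C := by
  obtain ⟨x₀, hx₀⟩ := hF.conn.nonempty
  have hex : ∀ x ∈ D, ∀ y ∈ D, ∃ L, Joins D π ε c x y L := by
    intro x hx y hy
    refine hF.conn.isPreconnected.induction₂' (fun x y => ∃ L, Joins D π ε c x y L) ?_ ?_ hx hy
    · intro x hx
      obtain ⟨L, hL⟩ := exists_joins_ball hF hx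
      have hδ := hF.infDist_pos hx
      have hxb : x ∈ ball x (infDist x (frontier D) / 2) := mem_ball_self (by positivity)
      filter_upwards [mem_nhdsWithin_of_mem_nhds (ball_mem_nhds x (half_pos hδ))] with y hy
      exact ⟨⟨L, hL x hxb y hy⟩, ⟨L, hL y hy x hxb⟩⟩
    · rintro x y z - - - ⟨L, hL⟩ ⟨L', hL'⟩
      exact ⟨L + L', hL.trans hF hL'⟩
  set K : Set (Euc d) := closure D ∩ {z | m ≤ infDist z (frontier D)} with hK
  have hKc : IsCompact K := hF.bdd.isCompact_closure.inter_right
    (isClosed_le continuous_const (continuous_infDist_pt _))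
  have hKD : K ⊆ D := by
    rintro z ⟨hz1, hz2⟩
    by_contra hzD
    have : z ∈ frontier D := by rw [hF.isOpen.frontier_eq]; exact ⟨hz1, hzD⟩
    have h0 := infDist_zero_of_mem this
    rw [Set.mem_ofPred_eq, h0] at hz2
    linarith
  obtain ⟨C, hC⟩ := hKc.induction_on (p := fun S => ∃ C, ∀ y ∈ S,
      Joins D π ε c x₀ y C ∧ Joins D π ε c y x₀ C) ⟨0, by simp⟩
    (fun s t hst ⟨C, h⟩ => ⟨C, fun y hy => h y (hst hy)⟩)
    (fun s t ⟨C, h⟩ ⟨C', h'⟩ => ⟨max C C', fun y hy => by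
      rcases hy with hy | hy
      · exact ⟨(h y hy).1.mono (le_max_left _ _), (h y hy).2.mono (le_max_left _ _)⟩
      · exact ⟨(h' y hy).1.mono (le_max_right _ _), (h' y hy).2.mono (le_max_right _ _)⟩⟩)
    (fun x hx => by
      obtain ⟨L, hL⟩ := exists_joins_ball hF (hKD hx)
      have hδ := hF.infDist_pos (hKD hx)
      have hxb : x ∈ ball x (infDist x (frontier D) / 2) := mem_ball_self (by positivity)
      obtain ⟨L1, hL1⟩ := hex x₀ hx₀ x (hKD hx)
      obtain ⟨L2, hL2⟩ := hex x (hKD hx) x₀ hx₀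
      refine ⟨_, mem_nhdsWithin_of_mem_nhds (ball_mem_nhds x (half_pos hδ)), max (L1 + L) (L + L2),
        fun y hy => ⟨?_, ?_⟩⟩
      · exact (hL1.trans hF (hL x hxb y hy)).mono (le_max_left _ _)
      · exact ((hL y hy x hxb).trans hF hL2).mono (le_max_right _ _))
  refine ⟨C + C, fun x hx y hy hxm hym => ?_⟩
  exact (hC x ⟨subset_closure hx, hxm⟩).2.trans hF (hC y ⟨subset_closure hy, hym⟩).1

/-- The quasi-metric `‖x - y‖ + max (h x) (h y)` governing `d_F`, where `h` is the square root of
the boundary distance. -/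
def quasi (D : Set (Euc d)) (x y : Euc d) : ℝ := dist x y + max (hfun D x) (hfun D y)

lemma hfun_pos (hF : FillingData D π ε c) {x : Euc d} (hx : x ∈ D) : 0 < hfun D x :=
  Real.sqrt_pos.2 (hF.infDist_pos hx)

lemma hfun_sq (D : Set (Euc d)) (x : Euc d) : hfun D x ^ 2 = infDist x (frontier D) :=
  Real.sq_sqrt infDist_nonneg

lemma log_hfun (D : Set (Euc d)) (x : Euc d) :
    Real.log (hfun D x) = Real.log (infDist x (frontier D)) / 2 :=
  Real.log_sqrt infDist_nonneg

lemma quasi_pos (hF : FillingData D π ε c) {x : Euc d} (y : Euc d) (hx : x ∈ D) :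
    0 < quasi D x y :=
  add_pos_of_nonneg_of_pos dist_nonneg (lt_max_of_lt_left (hfun_pos hF hx))

lemma exists_infDist_le (hF : FillingData D π ε c) :
    ∃ M, 1 ≤ M ∧ ∀ x ∈ D, infDist x (frontier D) ≤ M := by
  obtain ⟨ξ, hξ⟩ := hF.front
  refine ⟨max 1 (diam (closure D)), le_max_left _ _, fun x hx => ?_⟩
  refine (infDist_le_dist_of_mem hξ).trans (le_max_of_le_right ?_)
  exact dist_le_diam_of_mem hF.bdd.closure (subset_closure hx) (frontier_subset_closure hξ)

/-- Upper bound for `d_F`: climb along the normals to height comparable with `quasi D x y ^ 2`,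
move across, and descend. -/
lemma exists_upper (hF : FillingData D π ε c) (hν : NormalField D ε r ν) :
    ∃ C, ∀ x ∈ D, ∀ y ∈ D, Joins D π ε c x y
      (2 * Real.log (quasi D x y) - Real.log (hfun D x) - Real.log (hfun D y) + C) := by
  have hr := hν.pos
  have hr1 : r ≤ 1 := hν.le.trans hF.ε1.le
  obtain ⟨C₁, hC₁⟩ := exists_core_bound hF (m := r / 4) (by positivity)
  obtain ⟨M, hM1, hM⟩ := exists_infDist_le hF
  refine ⟨max (24 + 2 * c - Real.log r) (C₁ + Real.log M - 2 * Real.log (r / 2)),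
    fun x hx y hy => ?_⟩
  have hq := quasi_pos hF y hx
  have hδx := hF.infDist_pos hx
  have hδy := hF.infDist_pos hy
  rw [log_hfun, log_hfun]
  rcases le_or_gt (quasi D x y) (r / 2) with hqr | hqr
  · set q := quasi D x y with hqdef
    have hxq : hfun D x ≤ q := by
      rw [hqdef]; unfold quasi
      linarith [dist_nonneg (x := x) (y := y), le_max_left (hfun D x) (hfun D y)]
    have hyq : hfun D y ≤ q := by
      rw [hqdef]; unfold quasi
      linarith [dist_nonneg (x := x) (y := y), le_max_right (hfun D x) (hfun D y)]
    have hxyq : dist x y ≤ q := by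
      rw [hqdef]; unfold quasi
      linarith [(hfun_pos hF hx).trans_le (le_max_left (hfun D x) (hfun D y))]
    have hsq : q ^ 2 ≤ q ^ 2 / r := by
      rw [le_div_iff₀ hr]; nlinarith [sq_nonneg q]
    have htq : q ^ 2 / r ≤ q / 2 := by
      rw [div_le_iff₀ hr]; nlinarith
    have htr : q ^ 2 / r ≤ r := by linarith
    have hx1 : infDist x (frontier D) ≤ q ^ 2 / r := by
      rw [← hfun_sq]
      exact (pow_le_pow_left₀ (hfun_pos hF hx).le hxq 2).trans hsq
    have hy1 : infDist y (frontier D) ≤ q ^ 2 / r := by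
      rw [← hfun_sq]
      exact (pow_le_pow_left₀ (hfun_pos hF hy).le hyq 2).trans hsq
    obtain ⟨x', hx'D, hx't, hxx', jx, -⟩ := exists_lift hF hν hx hx1 htr
    obtain ⟨y', hy'D, hy't, hyy', -, jy⟩ := exists_lift hF hν hy hy1 htr
    have hd : ‖y' - x'‖ ≤ 2 * q := by
      rw [← dist_eq_norm]
      have := dist_triangle4 y' y x x'
      rw [dist_comm y' y, dist_comm y x] at this
      linarith
    have hcr := cross hF hν hx'D hy'D hx't hy't htr (by
      have e : 4 * r * (q ^ 2 / r) = (2 * q) ^ 2 := by field_simp; ring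
      rw [e]
      exact pow_le_pow_left₀ (norm_nonneg _) hd 2)
    refine ((jx.trans hF hcr).trans hF jy).mono ?_
    rw [Real.log_div (by positivity) hr.ne', Real.log_pow]
    have := le_max_left (24 + 2 * c - Real.log r) (C₁ + Real.log M - 2 * Real.log (r / 2))
    push_cast
    linarith
  · have hcore : ∀ z ∈ D, ∃ z' ∈ D, r / 4 ≤ infDist z' (frontier D) ∧
        Joins D π ε c z z' ((Real.log M - Real.log (infDist z (frontier D))) / 2) ∧
        Joins D π ε c z' z ((Real.log M - Real.log (infDist z (frontier D))) / 2) := by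
      intro z hz
      have hδ := hF.infDist_pos hz
      rcases le_or_gt (infDist z (frontier D)) (r / 4) with h | h
      · obtain ⟨z', h1, h2, -, h3, h4⟩ := exists_lift hF hν hz h (by linarith)
        have hl : Real.log (r / 4) ≤ Real.log M := Real.log_le_log (by positivity) (by linarith)
        exact ⟨z', h1, h2.ge, h3.mono (by linarith), h4.mono (by linarith)⟩
      · have hl := Real.log_le_log hδ (hM z hz)
        have := (Joins.refl (c := c) hF hz).mono
          (L' := (Real.log M - Real.log (infDist z (frontier D))) / 2) (by linarith)
        exact ⟨z, hz, h.le, this, this⟩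
    obtain ⟨x', hx'D, hx't, jx, -⟩ := hcore x hx
    obtain ⟨y', hy'D, hy't, -, jy⟩ := hcore y hy
    refine ((jx.trans hF (hC₁ x' hx'D y' hy'D hx't hy't)).trans hF jy).mono ?_
    have h1 := Real.log_le_log (by positivity) hqr.le
    have := le_max_right (24 + 2 * c - Real.log r) (C₁ + Real.log M - 2 * Real.log (r / 2))
    linarith

/-! ### The lower bound and the four-point condition -/

/-- Lower bound for `d_F`, obtained from the potential based at `x`. -/
lemma exists_lower (hF : FillingData D π ε c) :
    ∃ C, ∀ x ∈ D, ∀ y ∈ D, ∀ L, Joins D π ε c x y L →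
      2 * Real.log (quasi D x y) - Real.log (hfun D x) - Real.log (hfun D y) - C ≤ L := by
  obtain ⟨M, hM1, hM⟩ := exists_infDist_le hF
  have hε := hF.ε0
  have hε1 := hF.ε1
  have hA : 6 ≤ potA ε c := potA_ge hF.c0
  set κ := √(ε / M) with hκ
  have hκ0 : 0 < κ := Real.sqrt_pos.2 (by positivity)
  have hκ1 : κ ≤ 1 := Real.sqrt_le_one.2 (by rw [div_le_one (by positivity)]; linarith)
  -- truncation changes the boundary distance by at most a bounded factor
  have hcut : ∀ z ∈ D, κ * hfun D z ≤ √(cut D ε z) := by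
    intro z hz
    unfold hfun
    rw [hκ, ← Real.sqrt_mul (by positivity)]
    have hδ := hF.infDist_pos hz
    refine Real.sqrt_le_sqrt (le_min ?_ ?_)
    · refine mul_le_of_le_one_left hδ.le ?_
      rw [div_le_one (by positivity)]; linarith
    · rw [div_mul_eq_mul_div, div_le_iff₀ (by positivity)]
      exact mul_le_mul_of_nonneg_left (hM z hz) hε.le
  refine ⟨2 * Real.log 2 - 2 * Real.log (κ / potA ε c), fun x hx y hy L hJ => ?_⟩
  have key := pot_sub_le hF (z₀ := x) (Real.sqrt_nonneg (cut D ε x)) hJ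
  have hex := cut_pos hF hx
  have hey := cut_pos hF hy
  have hκx := hcut x hx
  have hκy := hcut y hy
  have hex1 : cut D ε x ≤ infDist x (frontier D) := min_le_left _ _
  have hey1 : cut D ε y ≤ infDist y (frontier D) := min_le_left _ _
  have hey2 : cut D ε y ≤ 1 := (min_le_right _ _).trans hε1.le
  have hq := quasi_pos hF y hx
  have lx := Real.log_le_log hex hex1
  have ly := Real.log_le_log hey hey1
  have hhx := hfun_pos hF hx
  have hhy := hfun_pos hF hy
  obtain ⟨A, hAdef⟩ : ∃ A, A = potA ε c := ⟨_, rfl⟩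
  rw [← hAdef] at key hA ⊢
  have hA0 : 0 < A := by linarith
  have hx0 := potQ_lower (ρ := 0) hA (Real.sqrt_nonneg (cut D ε x)) le_rfl hex
    ((min_le_right _ _).trans hε1.le)
  have px : pot A √(cut D ε x) (dist x x) (cut D ε x) ≤
      2 * Real.log 2 + Real.log (cut D ε x) / 2 := by
    have h1 : potQ A √(cut D ε x) 0 (cut D ε x) ≤ 2 * √(cut D ε x) := by
      unfold potQ
      have : 0 ≤ 2 / A * cut D ε x := by positivity
      rw [zero_div]
      linarith
    have h2 := Real.log_le_log hx0.2.2 h1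
    rw [Real.log_mul two_ne_zero (Real.sqrt_pos.2 hex).ne', Real.log_sqrt hex.le] at h2
    unfold pot
    rw [dist_self]
    linarith
  have py : 2 * (Real.log (κ / A) + Real.log (quasi D x y)) - Real.log (cut D ε y) / 2 ≤
      pot A √(cut D ε x) (dist x y) (cut D ε y) := by
    have h1 : κ / A * quasi D x y ≤ potQ A √(cut D ε x) (dist x y) (cut D ε y) := by
      have e1 : (2 : ℝ) / A ≤ 1 / 3 := by rw [div_le_div_iff₀ hA0 (by norm_num)]; linarith
      have e2 : cut D ε y ≤ √(cut D ε y) := Real.le_sqrt_of_sq_le (by nlinarith)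
      have e3 : 2 / A * cut D ε y ≤ 1 / 3 * √(cut D ε y) := by gcongr
      have e4 : (1 : ℝ) / A ≤ 1 / 6 := one_div_le_one_div_of_le (by norm_num) hA
      have e5 : κ / A * dist x y ≤ dist x y / A := by
        rw [div_mul_eq_mul_div]
        gcongr
        exact mul_le_of_le_one_left dist_nonneg hκ1
      have e6 : κ * max (hfun D x) (hfun D y) ≤ √(cut D ε x) + √(cut D ε y) := by
        rcases max_choice (hfun D x) (hfun D y) with h | h <;> rw [h]
        · linarith [Real.sqrt_nonneg (cut D ε y)]
        · linarith [Real.sqrt_nonneg (cut D ε x)]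
      have e7 : κ / A * max (hfun D x) (hfun D y) ≤ 1 / 6 * (√(cut D ε x) + √(cut D ε y)) := by
        calc κ / A * max (hfun D x) (hfun D y) = 1 / A * (κ * max (hfun D x) (hfun D y)) := by ring
          _ ≤ 1 / 6 * (√(cut D ε x) + √(cut D ε y)) := by gcongr
      unfold potQ quasi
      rw [mul_add]
      linarith [Real.sqrt_nonneg (cut D ε y), Real.sqrt_nonneg (cut D ε x)]
    have h2 := Real.log_le_log (by positivity) h1
    rw [Real.log_mul (by positivity) hq.ne'] at h2
    unfold pot
    linarith
  rw [log_hfun, log_hfun]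
  linarith

lemma quasi_comm (D : Set (Euc d)) (x y : Euc d) : quasi D x y = quasi D y x := by
  unfold quasi
  rw [dist_comm, max_comm]

lemma quasi_triangle (D : Set (Euc d)) (x y z : Euc d) :
    quasi D x y ≤ quasi D x z + quasi D z y := by
  unfold quasi
  have h1 := dist_triangle x z y
  have h2 : max (hfun D x) (hfun D y) ≤ max (hfun D x) (hfun D z) + max (hfun D z) (hfun D y) := by
    have hx : 0 ≤ hfun D x := Real.sqrt_nonneg _
    have hy : 0 ≤ hfun D y := Real.sqrt_nonneg _
    refine max_le ?_ ?_
    · linarith [le_max_left (hfun D x) (hfun D z), le_max_right (hfun D z) (hfun D y)]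
    · linarith [le_max_left (hfun D x) (hfun D z), le_max_right (hfun D z) (hfun D y)]
  linarith

/-- Multiplicative four-point inequality for a quasi-metric: compare with the smallest of the four
sides `p, q, s, t` of the quadrilateral with diagonals `a, b`. -/
lemma mul_le_four_mul_max {a b p q s t : ℝ} (hb : 0 ≤ b) (hp : 0 ≤ p)
    (hq : 0 ≤ q) (hs : 0 ≤ s) (ht : 0 ≤ t) (h1 : a ≤ p + t) (h2 : a ≤ s + q) (h3 : b ≤ p + s)
    (h4 : b ≤ t + q) : a * b ≤ 4 * max (p * q) (s * t) := by
  have key : ∀ {u v : ℝ}, 0 ≤ u → a ≤ 2 * u → b ≤ 2 * v → a * b ≤ 4 * (u * v) := by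
    intro u v hu hau hbv
    calc a * b ≤ 2 * u * (2 * v) := mul_le_mul hau hbv hb (by positivity)
      _ = 4 * (u * v) := by ring
  have hl := le_max_left (p * q) (s * t)
  have hr := le_max_right (p * q) (s * t)
  rcases le_total p q with hpq | hpq <;> rcases le_total s t with hst | hst
  · rcases le_total p s with hps | hps
    · linarith [key ht (by linarith : a ≤ 2 * t) (by linarith : b ≤ 2 * s)]
    · linarith [key hq (by linarith : a ≤ 2 * q) (by linarith : b ≤ 2 * p)]
  · rcases le_total p t with hps | hps
    · linarith [key ht (by linarith : a ≤ 2 * t) (by linarith : b ≤ 2 * s)]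
    · linarith [key hp (by linarith : a ≤ 2 * p) (by linarith : b ≤ 2 * q)]
  · rcases le_total q s with hps | hps
    · linarith [key hs (by linarith : a ≤ 2 * s) (by linarith : b ≤ 2 * t)]
    · linarith [key hq (by linarith : a ≤ 2 * q) (by linarith : b ≤ 2 * p)]
  · rcases le_total q t with hps | hps
    · linarith [key hs (by linarith : a ≤ 2 * s) (by linarith : b ≤ 2 * t)]
    · linarith [key hp (by linarith : a ≤ 2 * p) (by linarith : b ≤ 2 * q)]

lemma log_quasi_four (hF : FillingData D π ε c) {x₁ x₂ x₃ x₄ : Euc d} (h1 : x₁ ∈ D) (h2 : x₂ ∈ D)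
    (h3 : x₃ ∈ D) :
    Real.log (quasi D x₁ x₂) + Real.log (quasi D x₃ x₄) ≤ Real.log 4 +
      max (Real.log (quasi D x₁ x₃) + Real.log (quasi D x₂ x₄))
        (Real.log (quasi D x₁ x₄) + Real.log (quasi D x₂ x₃)) := by
  have p12 := quasi_pos hF x₂ h1
  have p34 := quasi_pos hF x₄ h3
  have p13 := quasi_pos hF x₃ h1
  have p24 := quasi_pos hF x₄ h2
  have p14 := quasi_pos hF x₄ h1
  have p23 := quasi_pos hF x₃ h2
  have t1 := quasi_triangle D x₁ x₂ x₃
  have t2 := quasi_triangle D x₁ x₂ x₄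
  have t3 := quasi_triangle D x₃ x₄ x₁
  have t4 := quasi_triangle D x₃ x₄ x₂
  rw [quasi_comm D x₃ x₂] at t1 t4
  rw [quasi_comm D x₄ x₂] at t2
  rw [quasi_comm D x₃ x₁] at t3
  have h := mul_le_four_mul_max p34.le p13.le p24.le p14.le p23.le t1 t2 t3 t4
  rw [← Real.log_mul p12.ne' p34.ne', ← Real.log_mul p13.ne' p24.ne', ← Real.log_mul p14.ne' p23.ne']
  rcases max_choice (quasi D x₁ x₃ * quasi D x₂ x₄) (quasi D x₁ x₄ * quasi D x₂ x₃) with hm | hm <;>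
    rw [hm] at h
  · have := Real.log_le_log (by positivity) h
    rw [Real.log_mul (x := 4) (by norm_num) (by positivity)] at this
    exact this.trans (by gcongr; exact le_max_left _ _)
  · have := Real.log_le_log (by positivity) h
    rw [Real.log_mul (x := 4) (by norm_num) (by positivity)] at this
    exact this.trans (by gcongr; exact le_max_right _ _)

lemma four_point (hF : FillingData D π ε c) (hν : NormalField D ε r ν) :
    ∃ δ : ℝ, 0 ≤ δ ∧ ∀ x₁ ∈ D, ∀ x₂ ∈ D, ∀ x₃ ∈ D, ∀ x₄ ∈ D,
      dF D π ε c x₁ x₂ + dF D π ε c x₃ x₄ ≤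
        max (dF D π ε c x₁ x₃ + dF D π ε c x₂ x₄)
            (dF D π ε c x₁ x₄ + dF D π ε c x₂ x₃)
          + 2 * δ := by
  obtain ⟨C, hC⟩ := exists_upper hF hν
  obtain ⟨C', hC'⟩ := exists_lower hF
  have up : ∀ x ∈ D, ∀ y ∈ D, dF D π ε c x y ≤
      2 * Real.log (quasi D x y) - Real.log (hfun D x) - Real.log (hfun D y) + C :=
    fun x hx y hy => (hC x hx y hy).dF_le hF.c0.le
  have lo : ∀ x ∈ D, ∀ y ∈ D,
      2 * Real.log (quasi D x y) - Real.log (hfun D x) - Real.log (hfun D y) - C' ≤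
        dF D π ε c x y := by
    intro x hx y hy
    refine le_csInf ?_ ?_
    · obtain ⟨γ, g1, g2, g3, g4, -⟩ := hC x hx y hy
      exact ⟨_, γ, g1, g2, g3, g4, rfl⟩
    · rintro L ⟨γ, g1, g2, g3, g4, rfl⟩
      exact hC' x hx y hy _ ⟨γ, g1, g2, g3, g4, le_rfl⟩
  refine ⟨max 0 (C + C' + Real.log 4), le_max_left _ _, fun x₁ h1 x₂ h2 x₃ h3 x₄ h4 => ?_⟩
  have hm := le_max_right 0 (C + C' + Real.log 4)
  have hlog := log_quasi_four hF (x₄ := x₄) h1 h2 h3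
  have u12 := up x₁ h1 x₂ h2
  have u34 := up x₃ h3 x₄ h4
  rcases max_choice (Real.log (quasi D x₁ x₃) + Real.log (quasi D x₂ x₄))
      (Real.log (quasi D x₁ x₄) + Real.log (quasi D x₂ x₃)) with h | h <;> rw [h] at hlog
  · have := le_max_left (dF D π ε c x₁ x₃ + dF D π ε c x₂ x₄)
      (dF D π ε c x₁ x₄ + dF D π ε c x₂ x₃)
    linarith [lo x₁ h1 x₃ h3, lo x₂ h2 x₄ h4]
  · have := le_max_right (dF D π ε c x₁ x₃ + dF D π ε c x₂ x₄)
      (dF D π ε c x₁ x₄ + dF D π ε c x₂ x₃)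
    linarith [lo x₁ h1 x₄ h4, lo x₂ h2 x₃ h3]

end Upper

/-- For a bounded strongly minimally convex domain the metric space
`(D, d_F)` (the intrinsic distance of the filling Finsler metric) is Gromov hyperbolic:
the four-point condition holds with some constant `2δ`. -/
theorem dF_gromov_hyperbolic
    (d : ℕ) (hd : 3 ≤ d) (D : Set (Euc d)) (hD : IsStronglyMinimallyConvex D)
    (ε : ℝ) (hε0 : 0 < ε) (hε1 : ε < 1) (c : ℝ) (hc : 0 < c)
    (π : Euc d → Euc d)
    (hπ : ∀ x : Euc d, Metric.infDist x (frontier D) ≤ ε →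
      π x ∈ frontier D ∧ dist x (π x) = Metric.infDist x (frontier D) ∧
      ∀ q ∈ frontier D, dist x q = Metric.infDist x (frontier D) → q = π x) :
    ∃ δ : ℝ, 0 ≤ δ ∧ ∀ x₁ ∈ D, ∀ x₂ ∈ D, ∀ x₃ ∈ D, ∀ x₄ ∈ D,
      dF D π ε c x₁ x₂ + dF D π ε c x₃ x₄ ≤
        max (dF D π ε c x₁ x₃ + dF D π ε c x₂ x₄)
            (dF D π ε c x₁ x₄ + dF D π ε c x₂ x₃)
          + 2 * δ := by
  obtain ⟨ho, hconn, hb, U, u, hU, hfU, hu, hDU, hf0, hne, -⟩ := hD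
  have : Nonempty (Fin d) := ⟨⟨0, by omega⟩⟩
  have hfront : (frontier D).Nonempty := by
    rw [nonempty_frontier_iff]
    refine ⟨hconn.nonempty, fun h => ?_⟩
    rw [h] at hb
    exact NormedSpace.unbounded_univ ℝ (Euc d) hb
  have hF : FillingData D π ε c := ⟨ho, hconn, hb, hfront, hε0, hε1, hc, hπ⟩
  obtain ⟨r, hr, hrε, hballs⟩ :=
    exists_twoBalls hF.isCompact_frontier hU hfU hu hDU hf0 hne hε0
  choose! ν hν using hballs
  exact four_point hF (r := r) (ν := ν) ⟨hr, hrε, hν⟩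
end
end

section
/- Let d ≥ 3, let D ⊂ ℝ^d be a convex domain, and let f : 𝔻 → ∂D be a non-constant conformal harmonic map. Then there exists an affine 2-plane L ⊂ ℝ^d such that ∂D ∩ L has non-empty interior in L. -/
/-!
Let `ℓ` be a supporting functional of `D` at the boundary point `f 0`. The function `ℓ ∘ f` is
harmonic and attains its maximum at `0`, so it is constant by the strong maximum principle: the
whole image of `f` lies in one supporting hyperplane `H` (`exists_supporting_hyperplane`). The set
`closure D ∩ H` is convex and, since `ℓ` is strictly smaller on `D` than on `H`, it is contained in
the frontier of `D`; hence so is the convex hull of the image of `f`.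

A non-constant conformal map does not have its image in a line
(`ConformalHarmonicOnDisk.exists_notMem_line`), so the image contains three affinely independent
points. The triangle they span lies in the frontier of `D` and has non-empty interior in its plane
(`exists_ball_in_triangle`).
-/

open scoped RealInnerProductSpace ENNReal
open Metric Set Filter

noncomputable section

/-- A conformal harmonic map, read in the complex coordinate, is harmonic in the sense of
Mathlib's Laplacian. -/
lemma ConformalHarmonicOnDisk.harmonicOnNhd {d : ℕ} {f : Euc 2 → Euc d}
    (hf : ConformalHarmonicOnDisk f) :
    InnerProductSpace.HarmonicOnNhd (f ∘ Complex.orthonormalBasisOneI.repr) (ball (0 : ℂ) 1) := by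
  set e := Complex.orthonormalBasisOneI.repr with he
  have hball : ∀ z ∈ ball (0 : ℂ) 1, e z ∈ unitDisk := by
    intro z hz
    simpa [unitDisk] using hz
  have he1 : e 1 = EuclideanSpace.single 0 1 := by
    simpa using Complex.orthonormalBasisOneI.repr_self 0
  have heI : e Complex.I = EuclideanSpace.single 1 1 := by
    simpa using Complex.orthonormalBasisOneI.repr_self 1
  have hC : ∀ z ∈ ball (0 : ℂ) 1, ContDiffAt ℝ 2 (f ∘ e) z := by
    intro z hz
    have h1 : ContDiffAt ℝ 2 f (e z) :=
      hf.1.contDiffAt (isOpen_ball.mem_nhds (hball z hz))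
    exact h1.comp z e.contDiff.contDiffAt
  have key : ∀ z ∈ ball (0 : ℂ) 1, ∀ (v : ℂ) (i : Fin 2), e v = EuclideanSpace.single i 1 →
      iteratedFDeriv ℝ 2 (f ∘ e) z ![v, v] =
        fderiv ℝ (pd i f) (e z) (EuclideanSpace.single i 1) := by
    intro z hz v i hv
    have hd : DifferentiableAt ℝ (fderiv ℝ (f ∘ e)) z :=
      ((hC z hz).fderiv_right (m := 1) (by norm_num)).differentiableAt (by norm_num)
    have h1 : (fun y => fderiv ℝ (f ∘ e) y v) = pd i f ∘ e := by
      funext y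
      have := e.toContinuousLinearEquiv.comp_right_fderiv (f := f) (x := y)
      have h2 := congrArg (fun T => T v) this
      simpa [pd, hv] using h2
    have h3 : fderiv ℝ (fun y => fderiv ℝ (f ∘ e) y v) z v = fderiv ℝ (fderiv ℝ (f ∘ e)) z v v := by
      rw [fderiv_clm_apply hd (differentiableAt_const v)]
      simp
    rw [iteratedFDeriv_two_apply]
    simp only [Matrix.cons_val_zero, Matrix.cons_val_one]
    rw [← h3, h1]
    have := e.toContinuousLinearEquiv.comp_right_fderiv (f := pd i f) (x := z)
    have h2 := congrArg (fun T => T v) this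
    simpa [hv] using h2
  intro z hz
  refine ⟨hC z hz, ?_⟩
  filter_upwards [isOpen_ball.mem_nhds hz] with y hy
  rw [InnerProductSpace.laplacian_eq_iteratedFDeriv_complexPlane]
  simp only [key y hy 1 0 he1, key y hy Complex.I 1 heI]
  exact hf.2.1 _ (hball y hy)

/-- Strong maximum principle on the disk: a harmonic function `u = Re G` attaining its maximum is
constant, by the maximum modulus principle for `exp ∘ G`. -/
lemma harmonic_eq_of_isMaxOn {u : ℂ → ℝ}
    (hu : InnerProductSpace.HarmonicOnNhd u (ball (0 : ℂ) 1)) {z₀ : ℂ} (hz₀ : z₀ ∈ ball (0 : ℂ) 1)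
    (hmax : ∀ z ∈ ball (0 : ℂ) 1, u z ≤ u z₀) : ∀ z ∈ ball (0 : ℂ) 1, u z = u z₀ := by
  obtain ⟨G, hG, hGu⟩ := hu.exists_analyticOnNhd_ball_re_eq
  have hre : ∀ z ∈ ball (0 : ℂ) 1, (G z).re = u z := fun z hz => hGu hz
  have hd : DifferentiableOn ℂ (fun z => Complex.exp (G z)) (ball (0 : ℂ) 1) :=
    hG.differentiableOn.cexp
  have h := Complex.norm_eqOn_of_isPreconnected_of_isMaxOn
    (convex_ball (0 : ℂ) 1).isPreconnected isOpen_ball hd hz₀ (by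
      intro z hz
      simp only [Set.mem_ofPred_eq, Function.comp_apply, Complex.norm_exp, Real.exp_le_exp]
      rw [hre z hz, hre z₀ hz₀]
      exact hmax z hz)
  intro z hz
  have h1 := h hz
  simp only [Function.comp_apply, Function.const_apply, Complex.norm_exp, Real.exp_eq_exp] at h1
  rwa [hre z hz, hre z₀ hz₀] at h1

/-- The image of a non-constant conformal map is not contained in a line: otherwise the two partial
derivatives would be parallel, hence, being orthogonal and of equal norm, zero. -/
lemma ConformalHarmonicOnDisk.exists_notMem_line {d : ℕ} {f : Euc 2 → Euc d}
    (hf : ConformalHarmonicOnDisk f) (hnc : ∃ z ∈ unitDisk, ∃ w ∈ unitDisk, f z ≠ f w)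
    (a v : Euc d) : ∃ z ∈ unitDisk, f z - a ∉ Submodule.span ℝ {v} := by
  by_contra! hline
  obtain ⟨z₁, hz₁, z₂, hz₂, hne⟩ := hnc
  have hdiff : DifferentiableOn ℝ f unitDisk := hf.1.differentiableOn (by norm_num)
  refine hne (isOpen_ball.is_const_of_fderiv_eq_zero
    (convex_ball (0 : Euc 2) 1).isPreconnected hdiff ?_ hz₁ hz₂)
  intro z hz
  set K := Submodule.span ℝ {v} with hK
  have hmem : ∀ y, fderiv ℝ f z y ∈ K := by
    intro y
    have hfz : HasFDerivAt f (fderiv ℝ f z) z :=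
      (hdiff.differentiableAt (isOpen_ball.mem_nhds hz)).hasFDerivAt
    -- The projection onto `Kᗮ` annihilates `f - a`, hence also the derivative of `f`.
    have h1 := (Kᗮ.starProjection.hasFDerivAt (x := f z - a)).comp z (hfz.sub_const a)
    have h2 : (Kᗮ.starProjection ∘ fun x => f x - a) =ᶠ[nhds z] fun _ => (0 : Euc d) := by
      filter_upwards [isOpen_ball.mem_nhds hz] with x hx
      simp only [Function.comp_apply]
      rw [Submodule.starProjection_apply_eq_zero_iff, Submodule.orthogonal_orthogonal]
      exact hline x hx
    have h3 := (h1.congr_of_eventuallyEq h2.symm).unique (hasFDerivAt_const (0 : Euc d) z)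
    have h4 := congrArg (fun T => T y) h3
    simp only [ContinuousLinearMap.comp_apply, zero_apply] at h4
    rwa [Submodule.starProjection_apply_eq_zero_iff, Submodule.orthogonal_orthogonal] at h4
  obtain ⟨α, hα⟩ := Submodule.mem_span_singleton.1 (hmem (EuclideanSpace.single 0 1))
  obtain ⟨β, hβ⟩ := Submodule.mem_span_singleton.1 (hmem (EuclideanSpace.single 1 1))
  obtain ⟨hn, ho⟩ := hf.2.2 z hz
  have h0 : pd 0 f z = α • v := hα.symm
  have h1 : pd 1 f z = β • v := hβ.symm
  have hz0 : pd 0 f z = 0 ∧ pd 1 f z = 0 := by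
    have : pd 0 f z = 0 ∨ pd 1 f z = 0 := by
      rw [h0, h1, inner_smul_left, inner_smul_right, real_inner_self_eq_norm_sq] at ho
      rw [h0, h1]
      simpa [or_assoc, or_comm, or_left_comm] using ho
    rcases this with h | h
    · exact ⟨h, by rw [h, norm_zero] at hn; exact norm_eq_zero.1 hn.symm⟩
    · exact ⟨by rw [h, norm_zero] at hn; exact norm_eq_zero.1 hn, h⟩
  ext1 y
  have hy : y = y 0 • EuclideanSpace.single 0 (1 : ℝ) + y 1 • EuclideanSpace.single 1 (1 : ℝ) := by
    ext i
    fin_cases i <;> simp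
  rw [hy, map_add, map_smul, map_smul]
  have e0 : fderiv ℝ f z (EuclideanSpace.single 0 1) = 0 := hz0.1
  have e1 : fderiv ℝ f z (EuclideanSpace.single 1 1) = 0 := hz0.2
  rw [e0, e1]
  simp

/-- The whole disk lies in one supporting hyperplane of `D`. -/
lemma exists_supporting_hyperplane {d : ℕ} {D : Set (Euc d)}
    (hOpen : IsOpen D) (hConv : Convex ℝ D) {f : Euc 2 → Euc d} (hf : ConformalHarmonicOnDisk f)
    (hfb : ∀ z ∈ unitDisk, f z ∈ frontier D) :
    ∃ (ℓ : Euc d →L[ℝ] ℝ) (m : ℝ), (∀ x ∈ D, ℓ x < m) ∧ ∀ z ∈ unitDisk, ℓ (f z) = m := by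
  have h0 : (0 : Euc 2) ∈ unitDisk := mem_ball_self one_pos
  have hnot : f 0 ∉ D := by
    have := hfb 0 h0
    rw [hOpen.frontier_eq] at this
    exact this.2
  obtain ⟨ℓ, hℓ⟩ := geometric_hahn_banach_open_point hConv hOpen hnot
  have hle : ∀ z ∈ unitDisk, ℓ (f z) ≤ ℓ (f 0) := by
    intro z hz
    exact closure_minimal (fun x hx => (hℓ x hx).le)
      (isClosed_le ℓ.continuous continuous_const) (hfb z hz).1
  refine ⟨ℓ, ℓ (f 0), hℓ, ?_⟩
  set e := Complex.orthonormalBasisOneI.repr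
  have h := harmonic_eq_of_isMaxOn (hf.harmonicOnNhd.comp_CLM ℓ) (mem_ball_self one_pos) (by
    intro z hz
    have : e z ∈ unitDisk := by simpa [unitDisk] using hz
    simpa using hle _ this)
  intro z hz
  have hz' : e.symm z ∈ ball (0 : ℂ) 1 := by simpa [unitDisk] using hz
  have h1 := h _ hz'
  simp only [Function.comp_apply] at h1
  rwa [e.apply_symm_apply, map_zero] at h1

/-- If `u, v` are linearly independent, points of the plane `a + span {u, v}` close to the
barycentre of the triangle `a, a + u, a + v` lie in that triangle. -/
lemma exists_ball_in_triangle {d : ℕ} (a u v : Euc d) (huv : LinearIndependent ℝ ![u, v]) :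
    ∃ r : ℝ, 0 < r ∧ ∀ q : Euc d, q - a ∈ Submodule.span ℝ {u, v} →
      dist q (a + ((1 / 3 : ℝ) • u + (1 / 3 : ℝ) • v)) < r →
      ∃ s t : ℝ, 0 ≤ s ∧ 0 ≤ t ∧ s + t ≤ 1 ∧ q = a + (s • u + t • v) := by
  let T : ℝ × ℝ →ₗ[ℝ] Euc d :=
    (LinearMap.toSpanSingleton ℝ _ u).coprod (LinearMap.toSpanSingleton ℝ _ v)
  have hT : ∀ s t : ℝ, T (s, t) = s • u + t • v := fun s t => by simp [T]
  have hker : LinearMap.ker T = ⊥ := by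
    rw [LinearMap.ker_eq_bot']
    rintro ⟨s, t⟩ hst
    rw [hT] at hst
    obtain ⟨hs, ht⟩ := LinearIndependent.pair_iff.1 huv s t hst
    simp [hs, ht]
  obtain ⟨K, hK, hanti⟩ := T.exists_antilipschitzWith hker
  have hK' : (0 : ℝ) < K := hK
  refine ⟨1 / (6 * K), by positivity, ?_⟩
  intro q hq hdist
  obtain ⟨s, t, hst⟩ := Submodule.mem_span_pair.1 hq
  have hqe : q = a + (s • u + t • v) := by rw [hst]; abel
  have h1 := hanti.le_mul_dist (s, t) (1 / 3, 1 / 3)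
  rw [hT, hT] at h1
  rw [hqe, dist_add_left] at hdist
  have h2 : dist ((s, t) : ℝ × ℝ) (1 / 3, 1 / 3) < 1 / 6 := by
    refine h1.trans_lt ?_
    calc (K : ℝ) * _ < K * (1 / (6 * K)) := by gcongr
      _ = 1 / 6 := by field_simp
  rw [Prod.dist_eq, max_lt_iff, Real.dist_eq, Real.dist_eq, abs_lt, abs_lt] at h2
  obtain ⟨⟨h3, h4⟩, h5, h6⟩ := h2
  exact ⟨s, t, by linarith, by linarith, by linarith, hqe⟩

/-- If the boundary of a convex domain `D ⊆ ℝ^d` (`d ≥ 3`) contains a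
non-constant conformal harmonic disk, then there is an affine 2-plane `L = x₀ + Λ` such
that `∂D ∩ L` has non-empty interior in `L`. -/
theorem affine_disk_in_boundary_of_conformal_disk
    (d : ℕ) (hd : 3 ≤ d) (D : Set (Euc d))
    (hOpen : IsOpen D) (hConn : IsConnected D) (hConv : Convex ℝ D)
    (f : Euc 2 → Euc d) (hf : ConformalHarmonicOnDisk f)
    (hfb : ∀ z ∈ unitDisk, f z ∈ frontier D)
    (hnc : ∃ z ∈ unitDisk, ∃ w ∈ unitDisk, f z ≠ f w) :
    ∃ (x₀ : Euc d) (Λ : Submodule ℝ (Euc d)), Module.finrank ℝ Λ = 2 ∧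
      ∃ p ∈ frontier D, p - x₀ ∈ Λ ∧ ∃ r : ℝ, 0 < r ∧
        ∀ q : Euc d, q - x₀ ∈ Λ → dist q p < r → q ∈ frontier D := by
  obtain ⟨ℓ, m, hD, hm⟩ := exists_supporting_hyperplane hOpen hConv hf hfb
  obtain ⟨z₁, hz₁, z₂, hz₂, hne⟩ := id hnc
  obtain ⟨z₃, hz₃, hnot⟩ := hf.exists_notMem_line hnc (f z₁) (f z₂ - f z₁)
  have hli : LinearIndependent ℝ ![f z₂ - f z₁, f z₃ - f z₁] := by
    rw [LinearIndependent.pair_iff' (sub_ne_zero.2 hne.symm)]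
    intro α hα
    exact hnot (Submodule.mem_span_singleton.2 ⟨α, hα⟩)
  obtain ⟨r, hr, hball⟩ := exists_ball_in_triangle (f z₁) _ _ hli
  -- The triangle lies in `closure D` by convexity and misses `D` since `ℓ = m` on it.
  have htri : ∀ s t : ℝ, 0 ≤ s → 0 ≤ t → s + t ≤ 1 →
      f z₁ + (s • (f z₂ - f z₁) + t • (f z₃ - f z₁)) ∈ frontier D := by
    intro s t hs ht hst
    rw [hOpen.frontier_eq]
    refine ⟨?_, fun hmem => ?_⟩
    · have h := hConv.closure.sum_mem (t := Finset.univ) (w := ![1 - s - t, s, t])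
        (z := ![f z₁, f z₂, f z₃])
        (by intro i _; fin_cases i <;> simp <;> linarith)
        (by simp [Fin.sum_univ_three]; ring)
        (by
          intro i _
          fin_cases i
          · exact (hfb z₁ hz₁).1
          · exact (hfb z₂ hz₂).1
          · exact (hfb z₃ hz₃).1)
      convert h using 1
      simp only [Fin.sum_univ_three, Matrix.cons_val]
      module
    · have h := hD _ hmem
      simp only [map_add, map_smul, map_sub, hm z₁ hz₁, hm z₂ hz₂, hm z₃ hz₃] at h
      simp at h
  refine ⟨f z₁, Submodule.span ℝ {f z₂ - f z₁, f z₃ - f z₁}, ?_, _,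
    htri (1 / 3) (1 / 3) (by norm_num) (by norm_num) (by norm_num), ?_, r, hr, ?_⟩
  · have h := finrank_span_eq_card hli
    rwa [Matrix.range_cons_cons_empty, Fintype.card_fin] at h
  · rw [add_sub_cancel_left]
    exact Submodule.mem_span_pair.2 ⟨_, _, rfl⟩
  · intro q hq hdist
    obtain ⟨s, t, hs, ht, hst, rfl⟩ := hball q hq hdist
    exact htri s t hs ht hst
end
end

section
/- Let d ≥ 3 and let ℍ^d = {(x,y) ∈ ℝ × ℝ^{d−1} : x > 0} be the half-space. Then for every (x,y) ∈ ℍ^d and every (u,v) ∈ ℝ × ℝ^{d−1}: g_{ℍ^d}((x,y),(u,v)) = |u|/(2x). -/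
/-!
The infimum is computed by comparing every disk with flat ones.

Lower bound. If `f` is a conformal harmonic disk in the half-space, its normal coordinate is a
positive harmonic function, hence the real part of a holomorphic map of the disk into the right
half-plane. The Schwarz lemma, after a Cayley transform of the target, bounds the derivative at
the centre by twice the value there (`norm_deriv_le_of_re_pos`, `abs_pd_le`), so `f_x(0) = r v`
forces `r |v₀| ≤ 2 p₀`.

Upper bound. Because `d ≥ 3`, there is a vector `c` orthogonal to both `v` and the normal
direction, with `‖c‖ = ‖v‖` (`exists_orthogonal_same_norm`). For holomorphic `G` with `G(0) = 0`,
the map `p + Re G • v + Im G • c` is conformal harmonic (`conformalHarmonic_planeMap`), and its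
normal coordinate is `p₀ + v₀ Re G`. If `v₀ = 0`, the choice `G(z) = r z` is allowed for every
`r > 0`, so the infimum is `0`. If `v₀ ≠ 0` has sign `ε`, the choice `G(z) = r z / (1 - ε z)` with
`r = 2 p₀ / |v₀|` gives the normal coordinate `p₀ Re ((1 + ε z) / (1 - ε z)) > 0` and attains
the lower bound.
-/

open scoped RealInnerProductSpace ENNReal
open Metric Set Filter

noncomputable section

/-! ### Gradient estimate for positive harmonic functions -/

/-- Schwarz–Pick at the origin for holomorphic maps of the disk into the right half-plane. -/
theorem norm_deriv_le_of_re_pos {F : ℂ → ℂ} (hF : DifferentiableOn ℂ F (ball 0 1))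
    (hpos : ∀ z ∈ ball (0 : ℂ) 1, 0 < (F z).re) :
    ‖deriv F 0‖ ≤ 2 * (F 0).re := by
  have h0 : (0 : ℂ) ∈ ball (0 : ℂ) 1 := by simp
  have hF0 := hpos 0 h0
  have hden : ∀ z ∈ ball (0 : ℂ) 1, F z + starRingEnd ℂ (F 0) ≠ 0 := by
    intro z hz h
    have := congrArg Complex.re h
    simp only [Complex.add_re, Complex.conj_re, Complex.zero_re] at this
    linarith [hpos z hz]
  set W : ℂ → ℂ := fun z => (F z - F 0) / (F z + starRingEnd ℂ (F 0)) with hW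
  have hWd : DifferentiableOn ℂ W (ball 0 1) :=
    (hF.sub_const _).div (hF.add_const _) hden
  have hW0 : W 0 = 0 := by simp [hW]
  have hmaps : MapsTo W (ball 0 1) (closedBall (W 0) 1) := by
    intro z hz
    rw [hW0, mem_closedBall_zero_iff]
    simp only [hW, norm_div]
    rw [div_le_one (norm_pos_iff.2 (hden z hz))]
    rw [Complex.norm_def, Complex.norm_def]
    apply Real.sqrt_le_sqrt
    simp only [Complex.normSq_apply, Complex.sub_re, Complex.sub_im, Complex.add_re,
      Complex.add_im, Complex.conj_re, Complex.conj_im]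
    nlinarith [mul_pos (hpos z hz) hF0]
  have hS := Complex.norm_deriv_le_div_of_mapsTo_ball hWd hmaps one_pos
  have hFd : HasDerivAt F (deriv F 0) 0 :=
    (hF.differentiableAt (isOpen_ball.mem_nhds h0)).hasDerivAt
  have hWder : HasDerivAt W (deriv F 0 / (2 * (F 0).re : ℝ)) 0 := by
    have h := (hFd.sub_const (F 0)).div (hFd.add_const (starRingEnd ℂ (F 0))) (hden 0 h0)
    refine HasDerivAt.congr_deriv (f := W) h ?_
    have hd := hden 0 h0
    have e : F 0 + starRingEnd ℂ (F 0) = (2 * (F 0).re : ℝ) := Complex.add_conj _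
    rw [e] at hd ⊢
    field_simp
    simp
  rw [hWder.deriv, norm_div, Complex.norm_real, Real.norm_of_nonneg (by linarith),
    div_le_iff₀ (by linarith)] at hS
  linarith

/-- The standard linear isometry from the complex plane to `ℝ²`. -/
def planeIso : ℂ ≃ₗᵢ[ℝ] Euc 2 := Complex.orthonormalBasisOneI.repr

theorem planeIso_one : planeIso 1 = EuclideanSpace.single 0 1 := by
  have h := Complex.orthonormalBasisOneI.repr_self 0
  simpa [planeIso] using h

theorem planeIso_I : planeIso Complex.I = EuclideanSpace.single 1 1 := by
  have h := Complex.orthonormalBasisOneI.repr_self 1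
  simpa [planeIso] using h

theorem planeIso_mem {z : ℂ} : planeIso z ∈ unitDisk ↔ z ∈ ball (0 : ℂ) 1 := by
  simp [unitDisk]

theorem isOpen_unitDisk : IsOpen unitDisk := isOpen_ball

/-- Coordinates of a conformal harmonic disk, read on the complex unit disk, are harmonic in
Mathlib's sense. -/
theorem ConformalHarmonicOnDisk.harmonicOnNhd_s12 {d : ℕ} {f : Euc 2 → Euc d}
    (hf : ConformalHarmonicOnDisk f) (k : Fin d) :
    InnerProductSpace.HarmonicOnNhd (fun z : ℂ => f (planeIso z) k) (ball 0 1) := by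
  obtain ⟨hC, hL, -⟩ := hf
  let P : Euc d →L[ℝ] ℝ := EuclideanSpace.proj k
  let L : ℂ →L[ℝ] Euc 2 := planeIso.toContinuousLinearEquiv
  have hCat : ∀ z ∈ ball (0 : ℂ) 1, ContDiffAt ℝ 2 f (L z) := fun z hz =>
    hC.contDiffAt (isOpen_unitDisk.mem_nhds (planeIso_mem.2 hz))
  have hh : ∀ z ∈ ball (0 : ℂ) 1, ContDiffAt ℝ 2 (fun z : ℂ => P (f (L z))) z := fun z hz =>
    P.contDiff.contDiffAt.comp z ((hCat z hz).comp z L.contDiff.contDiffAt)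
  have hd1 : ∀ z ∈ ball (0 : ℂ) 1, ∀ v,
      fderiv ℝ (fun z : ℂ => P (f (L z))) z v = P (fderiv ℝ f (L z) (L v)) := by
    intro z hz v
    have h1 : HasFDerivAt f (fderiv ℝ f (L z)) (L z) :=
      ((hCat z hz).differentiableAt (by norm_num)).hasFDerivAt
    have := (P.hasFDerivAt.comp z (h1.comp z L.hasFDerivAt)).fderiv
    exact congrArg (fun A => A v) this
  have hd2 : ∀ z ∈ ball (0 : ℂ) 1, ∀ v,
      fderiv ℝ (fderiv ℝ (fun z : ℂ => P (f (L z)))) z v v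
        = P (fderiv ℝ (fun y => fderiv ℝ f y (L v)) (L z) (L v)) := by
    intro z hz v
    have hdd : DifferentiableAt ℝ (fderiv ℝ (fun z : ℂ => P (f (L z)))) z :=
      ((hh z hz).fderiv_right (m := 1) (by norm_num)).differentiableAt (by norm_num)
    have hff : DifferentiableAt ℝ (fderiv ℝ f) (L z) :=
      ((hCat z hz).fderiv_right (m := 1) (by norm_num)).differentiableAt (by norm_num)
    have e1 : fderiv ℝ (fderiv ℝ (fun z : ℂ => P (f (L z)))) z v v
        = fderiv ℝ (fun w => fderiv ℝ (fun z : ℂ => P (f (L z))) w v) z v := by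
      rw [fderiv_clm_apply hdd (differentiableAt_const v)]
      simp
    have e2 : (fun w => fderiv ℝ (fun z : ℂ => P (f (L z))) w v)
        =ᶠ[nhds z] fun w => P (fderiv ℝ f (L w) (L v)) := by
      filter_upwards [isOpen_ball.mem_nhds hz] with w hw using hd1 w hw v
    have hg : HasFDerivAt (fun y => fderiv ℝ f y (L v))
        (fderiv ℝ (fun y => fderiv ℝ f y (L v)) (L z)) (L z) :=
      (hff.clm_apply (differentiableAt_const _)).hasFDerivAt
    rw [e1, e2.fderiv_eq]
    exact congrArg (fun A => A v) (P.hasFDerivAt.comp z (hg.comp z L.hasFDerivAt)).fderiv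
  intro z hz
  refine ⟨hh z hz, ?_⟩
  filter_upwards [isOpen_ball.mem_nhds hz] with w hw
  change Laplacian.laplacian (fun z : ℂ => P (f (L z))) w = 0
  rw [InnerProductSpace.laplacian_eq_iteratedFDeriv_complexPlane]
  simp only [iteratedFDeriv_two_apply, Matrix.cons_val_zero, Matrix.cons_val_one]
  rw [hd2 w hw, hd2 w hw, ← map_add]
  have h1 : L 1 = EuclideanSpace.single 0 1 := planeIso_one
  have hI : L Complex.I = EuclideanSpace.single 1 1 := planeIso_I
  rw [h1, hI]
  have := hL (L w) (planeIso_mem.2 hw)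
  exact (congrArg P this).trans (map_zero P)

/-- A coordinate that is positive along a conformal harmonic disk is a positive harmonic
function, so its derivative at the centre is at most twice its value there. -/
theorem abs_pd_le {d : ℕ} {f : Euc 2 → Euc d} (hf : ConformalHarmonicOnDisk f) (k : Fin d)
    (hpos : ∀ z ∈ unitDisk, 0 < f z k) : |pd 0 f 0 k| ≤ 2 * f 0 k := by
  obtain ⟨F, hF, hFe⟩ := (hf.harmonicOnNhd_s12 k).exists_analyticOnNhd_ball_re_eq
  have h0 : (0 : ℂ) ∈ ball (0 : ℂ) 1 := by simp
  have hS := norm_deriv_le_of_re_pos hF.differentiableOn fun z hz => by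
    have := hFe hz
    simp only at this
    rw [this]
    exact hpos _ (planeIso_mem.2 hz)
  have hval : (F 0).re = f 0 k := by simpa using hFe h0
  let P : Euc d →L[ℝ] ℝ := EuclideanSpace.proj k
  let L : ℂ →L[ℝ] Euc 2 := planeIso.toContinuousLinearEquiv
  have hL0 : L 0 = 0 := map_zero L
  have h1 : HasFDerivAt f (fderiv ℝ f (L 0)) (L 0) :=
    ((hf.1.contDiffAt (isOpen_unitDisk.mem_nhds (planeIso_mem.2 h0))).differentiableAt
      (by norm_num)).hasFDerivAt
  have hA : HasFDerivAt (fun z : ℂ => f (planeIso z) k) _ 0 :=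
    P.hasFDerivAt.comp 0 (h1.comp 0 L.hasFDerivAt)
  have hB : HasFDerivAt (fun z : ℂ => (F z).re) _ 0 :=
    Complex.reCLM.hasFDerivAt.comp 0
      ((hF 0 h0).differentiableAt.hasDerivAt.complexToReal_fderiv)
  have hB' := hB.congr_of_eventuallyEq (f₁ := fun z : ℂ => f (planeIso z) k) (by
    filter_upwards [isOpen_ball.mem_nhds h0] with w hw using (hFe hw).symm)
  have hu := congrArg (fun A : ℂ →L[ℝ] ℝ => A 1) (hA.unique hB')
  have hL1 : L 1 = EuclideanSpace.single 0 1 := planeIso_one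
  have hder : pd 0 f 0 k = (deriv F 0).re := by
    simpa [hL0, hL1, P, pd] using hu
  rw [hder, ← hval]
  exact (Complex.abs_re_le_norm _).trans hS

/-! ### Flat conformal harmonic disks -/

/-- The real-linear map `s + it ↦ s b + t c`. -/
def planeMap {d : ℕ} (b c : Euc d) : ℂ →L[ℝ] Euc d :=
  Complex.reCLM.smulRight b + Complex.imCLM.smulRight c

theorem planeMap_apply {d : ℕ} (b c : Euc d) (z : ℂ) :
    planeMap b c z = z.re • b + z.im • c := rfl

/-- A holomorphic function followed by a conformal linear parametrisation of an affine plane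
is conformal harmonic. -/
theorem conformalHarmonic_planeMap {d : ℕ} {p b c : Euc d} (hn : ‖c‖ = ‖b‖) (ho : ⟪b, c⟫ = 0)
    {G : ℂ → ℂ} (hG : DifferentiableOn ℂ G (ball 0 1)) :
    ConformalHarmonicOnDisk (fun z => p + planeMap b c (G (planeIso.symm z))) ∧
    pd 0 (fun z => p + planeMap b c (G (planeIso.symm z))) 0 = planeMap b c (deriv G 0) := by
  let M := planeMap b c
  let K : Euc 2 →L[ℝ] ℂ := planeIso.symm.toContinuousLinearEquiv
  have hK0 : K (EuclideanSpace.single 0 1) = 1 := by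
    rw [← planeIso_one]; exact planeIso.symm_apply_apply 1
  have hK1 : K (EuclideanSpace.single 1 1) = Complex.I := by
    rw [← planeIso_I]; exact planeIso.symm_apply_apply _
  have hKm : ∀ z ∈ unitDisk, K z ∈ ball (0 : ℂ) 1 := by
    intro z hz
    rw [← planeIso_mem]
    convert hz
    exact planeIso.apply_symm_apply z
  -- Real derivative of a map of the form `M ∘ H ∘ K` with `H` holomorphic.
  have key : ∀ H : ℂ → ℂ, DifferentiableOn ℂ H (ball 0 1) → ∀ q : Euc d, ∀ z ∈ unitDisk, ∀ v,
      fderiv ℝ (fun z => q + M (H (K z))) z v = M (K v * deriv H (K z)) := by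
    intro H hH q z hz v
    have h1 := (hH.differentiableAt
      (isOpen_ball.mem_nhds (hKm z hz))).hasDerivAt.complexToReal_fderiv
    have h2 := ((M.hasFDerivAt.comp z (h1.comp z K.hasFDerivAt)).const_add q).fderiv
    have h3 := congrArg (fun A => A v) h2
    refine h3.trans ?_
    simp [mul_comm]
  have hG' : DifferentiableOn ℂ (deriv G) (ball 0 1) := hG.deriv isOpen_ball
  have hpd : ∀ i, ∀ z ∈ unitDisk, pd i (fun z => p + M (G (K z))) z
      = M (K (EuclideanSpace.single i 1) * deriv G (K z)) := fun i z hz => key G hG p z hz _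
  have hpd2 : ∀ i, ∀ z ∈ unitDisk, ∀ v, fderiv ℝ (pd i (fun z => p + M (G (K z)))) z v
      = M (K v * (K (EuclideanSpace.single i 1) * deriv (deriv G) (K z))) := by
    intro i z hz v
    have e : pd i (fun z => p + M (G (K z))) =ᶠ[nhds z]
        fun z => 0 + M (K (EuclideanSpace.single i 1) * deriv G (K z)) := by
      filter_upwards [isOpen_unitDisk.mem_nhds hz] with w hw
      rw [hpd i w hw, zero_add]
    rw [e.fderiv_eq, key (fun w => K (EuclideanSpace.single i 1) * deriv G w)
      (hG'.const_mul _) 0 z hz v, deriv_const_mul _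
      (hG'.differentiableAt (isOpen_ball.mem_nhds (hKm z hz)))]
  refine ⟨⟨?_, ?_, ?_⟩, ?_⟩
  · have h : ContDiffOn ℝ 2 G (ball 0 1) := (hG.contDiffOn isOpen_ball).restrict_scalars ℝ
    exact contDiffOn_const.add (M.contDiff.comp_contDiffOn
      (h.comp K.contDiff.contDiffOn fun z hz => hKm z hz))
  · intro z hz
    refine (congrArg₂ (· + ·) (hpd2 0 z hz _) (hpd2 1 z hz _)).trans ?_
    rw [hK0, hK1, ← mul_assoc Complex.I, Complex.I_mul_I]
    simp
  · intro z hz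
    have a0 := hpd 0 z hz
    have a1 := hpd 1 z hz
    rw [hK0, one_mul] at a0
    rw [hK1] at a1
    change ‖pd 0 (fun z => p + M (G (K z))) z‖ = ‖pd 1 (fun z => p + M (G (K z))) z‖ ∧
      ⟪pd 0 (fun z => p + M (G (K z))) z, pd 1 (fun z => p + M (G (K z))) z⟫ = 0
    rw [a0, a1]
    have ho' : ⟪c, b⟫ = 0 := by rw [real_inner_comm]; exact ho
    have hexp : ∀ s t : ℂ, ⟪M s, M t⟫ = (s.re * t.re + s.im * t.im) * ‖b‖ ^ 2 := by
      intro s t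
      simp only [M, planeMap_apply, inner_add_left, inner_add_right, real_inner_smul_left,
        real_inner_smul_right, ho, ho', real_inner_self_eq_norm_sq, hn]
      ring
    constructor
    · rw [← sq_eq_sq₀ (norm_nonneg _) (norm_nonneg _), ← real_inner_self_eq_norm_sq,
        ← real_inner_self_eq_norm_sq, hexp, hexp]
      simp only [Complex.mul_re, Complex.mul_im, Complex.I_re, Complex.I_im]
      ring
    · rw [hexp]
      simp only [Complex.mul_re, Complex.mul_im, Complex.I_re, Complex.I_im]
      ring
  · have := hpd 0 0 (by simp [unitDisk])
    rw [hK0, one_mul, map_zero] at this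
    exact this

/-- In dimension at least three, every vector `b` can be paired with a vector of equal length
that is orthogonal to both `b` and a given `e`. -/
theorem exists_orthogonal_same_norm {d : ℕ} (hd : 3 ≤ d) (e b : Euc d) :
    ∃ c : Euc d, ⟪e, c⟫ = 0 ∧ ⟪b, c⟫ = 0 ∧ ‖c‖ = ‖b‖ := by
  let S := Submodule.span ℝ ({e, b} : Set (Euc d))
  have hS : Module.finrank ℝ S ≤ 2 := by
    classical
    have h := finrank_span_finset_le_card (R := ℝ) ({e, b} : Finset (Euc d))
    have h2 := Finset.card_le_two (a := e) (b := b)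
    simp only [Finset.coe_insert, Finset.coe_singleton] at h
    exact h.trans h2
  have hne : Sᗮ ≠ ⊥ := by
    intro h
    have h1 := Submodule.finrank_add_finrank_orthogonal S
    rw [h, finrank_bot, finrank_euclideanSpace_fin] at h1
    omega
  obtain ⟨w, hw, hw0⟩ := Submodule.exists_mem_ne_zero_of_ne_bot hne
  have he : ⟪e, w⟫ = 0 := hw e (Submodule.subset_span (by simp))
  have hb : ⟪b, w⟫ = 0 := hw b (Submodule.subset_span (by simp))
  refine ⟨(‖b‖ / ‖w‖) • w, ?_, ?_, ?_⟩
  · rw [real_inner_smul_right, he, mul_zero]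
  · rw [real_inner_smul_right, hb, mul_zero]
  · rw [norm_smul, Real.norm_of_nonneg (by positivity),
      div_mul_cancel₀ _ (norm_ne_zero_iff.2 hw0)]

/-- The quantity is `Re ((1 + w) / (1 - w))`, the normal coordinate of the extremal disk. -/
theorem re_cayley_pos {w : ℂ} (hw : w ∈ ball (0 : ℂ) 1) : 0 < 1 + 2 * (w / (1 - w)).re := by
  have hw1 : w.re * w.re + w.im * w.im < 1 := by
    have h := mem_ball_zero_iff.1 hw
    rw [← Complex.normSq_apply, Complex.normSq_eq_norm_sq]
    nlinarith [norm_nonneg w]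
  have hd : 0 < Complex.normSq (1 - w) := by
    rw [Complex.normSq_apply]
    simp only [Complex.sub_re, Complex.sub_im, Complex.one_re, Complex.one_im]
    nlinarith [sq_nonneg w.im, sq_nonneg (w.re - 1)]
  rw [Complex.div_re, ← add_div, mul_div_assoc', ← sub_neg_eq_add, sub_pos, ← neg_div,
    div_lt_one hd, Complex.normSq_apply]
  simp only [Complex.sub_re, Complex.sub_im, Complex.one_re, Complex.one_im]
  nlinarith

/-- The minimal metric of the half-space
`ℍ^d = {x ∈ ℝ^d : x₀ > 0}` (`d ≥ 3`) is `g_{ℍ^d}((x,y),(u,v)) = |u|/(2x)`. -/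
theorem minimal_metric_halfspace
    (d : ℕ) (hd : 3 ≤ d) (p v : Euc d) (hp : 0 < p ⟨0, by omega⟩) :
    minMetric {x : Euc d | 0 < x ⟨0, by omega⟩} p v
      = |v ⟨0, by omega⟩| / (2 * p ⟨0, by omega⟩) := by
  set k : Fin d := ⟨0, by omega⟩
  obtain ⟨c, hc0, hcv, hcn⟩ := exists_orthogonal_same_norm hd (EuclideanSpace.single k 1) v
  have hck : c k = 0 := by
    rw [EuclideanSpace.inner_single_left] at hc0
    simpa using hc0
  unfold minMetric
  set A : Set ℝ := {t : ℝ | ∃ r : ℝ, 0 < r ∧ t = 1 / r ∧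
    ∃ f : Euc 2 → Euc d, ConformalHarmonicOnDisk f ∧
      (∀ z ∈ unitDisk, f z ∈ {x : Euc d | 0 < x k}) ∧ f 0 = p ∧ pd 0 f 0 = r • v} with hA
  have hlow : ∀ t ∈ A, |v k| / (2 * p k) ≤ t := by
    rintro t ⟨r, hr, rfl, f, hf, hm, hf0, hfd⟩
    have h := abs_pd_le hf k hm
    rw [hf0, hfd, PiLp.smul_apply, smul_eq_mul, abs_mul, abs_of_pos hr] at h
    rw [div_le_div_iff₀ (by positivity) hr]
    linarith
  have hbdd : BddBelow A := ⟨_, hlow⟩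
  have hmk : ∀ (r : ℝ) (G : ℂ → ℂ), 0 < r → DifferentiableOn ℂ G (ball 0 1) → G 0 = 0 →
      deriv G 0 = r → (∀ z ∈ ball (0 : ℂ) 1, 0 < p k + (G z).re * v k) → 1 / r ∈ A := by
    intro r G hr hG hG0 hG1 hpos
    obtain ⟨h1, h2⟩ := conformalHarmonic_planeMap (p := p) hcn hcv hG
    refine ⟨r, hr, rfl, _, h1, ?_, ?_, ?_⟩
    · intro z hz
      have hz' : planeIso.symm z ∈ ball (0 : ℂ) 1 := by
        rw [← planeIso_mem, planeIso.apply_symm_apply]; exact hz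
      simpa [planeMap_apply, hck] using hpos _ hz'
    · simp [hG0]
    · rw [h2, hG1]
      simp [planeMap_apply]
  by_cases hv : v k = 0
  · have hall : ∀ r : ℝ, 0 < r → 1 / r ∈ A := by
      intro r hr
      refine hmk r (fun z => r * z) hr (by fun_prop) (by simp) ?_ ?_
      · simp
      · intro z _
        simpa [hv] using hp
    rw [hv, abs_zero, zero_div] at hlow ⊢
    apply le_antisymm
    · refine le_of_forall_pos_le_add fun ε hε => ?_
      have := csInf_le hbdd (hall (1 / ε) (by positivity))
      simpa using this
    · exact le_csInf ⟨_, hall 1 one_pos⟩ hlow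
  · -- `ε` is the sign of `v k`; the extremal disk has normal coordinate
    -- `p k * Re ((1 + ε z) / (1 - ε z))`.
    have hav : 0 < |v k| := abs_pos.2 hv
    obtain ⟨ε, hε, hεv⟩ : ∃ ε : ℝ, |ε| = 1 ∧ v k = ε * |v k| := by
      rcases lt_or_gt_of_ne hv with h | h
      · exact ⟨-1, by simp, by rw [abs_of_neg h]; ring⟩
      · exact ⟨1, by simp, by rw [abs_of_pos h]; ring⟩
    have hεz : ∀ z ∈ ball (0 : ℂ) 1, (ε : ℂ) * z ∈ ball (0 : ℂ) 1 := by
      intro z hz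
      simpa [hε] using hz
    have hne : ∀ z ∈ ball (0 : ℂ) 1, 1 - (ε : ℂ) * z ≠ 0 := by
      intro z hz h
      have h1 := hεz z hz
      rw [← sub_eq_zero.1 h] at h1
      simp at h1
    set r : ℝ := 2 * p k / |v k| with hr
    have hrpos : 0 < r := by positivity
    have hmem : 1 / r ∈ A := by
      refine hmk r (fun z => r * (z / (1 - ε * z))) hrpos ?_ (by simp) ?_ ?_
      · exact (differentiableOn_id.div (by fun_prop) hne).const_mul _
      · have h := (((hasDerivAt_id (0 : ℂ)).div
          (((hasDerivAt_id (0 : ℂ)).const_mul (ε : ℂ)).const_sub 1)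
          (hne 0 (by simp))).const_mul (r : ℂ)).deriv
        refine Eq.trans h ?_
        simp
      · intro z hz
        have h := re_cayley_pos (hεz z hz)
        have e : p k + ((r : ℂ) * (z / (1 - ε * z))).re * v k
            = p k * (1 + 2 * ((ε : ℂ) * z / (1 - ε * z)).re) := by
          rw [mul_div_assoc, Complex.re_ofReal_mul, Complex.re_ofReal_mul, hr]
          nth_rw 2 [hεv]
          field_simp
        rw [e]
        positivity
    have he : 1 / r = |v k| / (2 * p k) := by rw [hr, one_div_div]
    exact le_antisymm (he ▸ csInf_le hbdd hmem) (le_csInf ⟨_, hmem⟩ hlow)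
end
end
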